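/- Let 𝒫 denote the class of all log-concave real random variables with 0 < ‖X‖_q < ∞. For all real p > q > 0, the supremum of ‖X‖_p/‖X‖_q over X ∈ 𝒫 is attained by a shifted exponential distribution: there exists a ∈ ℝ such that sup_{X ∈ 𝒫} ‖X‖_p/‖X‖_q = ‖E + a‖_p/‖E + a‖_q, where E has the exponential distribution with parameter 1. -/

import Mathlib

/-!
Two densities on a half-line with equal mass and equal `q`-th moment whose difference has sign
pattern `+ - +` are ordered in their `p`-th moments, by strict convexity of `x ^ (p / q)`. A
log-concave density exceeds an exponential one only on an interval, so this comparison replaces any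
log-concave distribution by a two-sided exponential one with the same `q`-th and no smaller `p`-th
absolute moment: first the half whose scale is larger relative to its mass becomes exponential, and
the resulting exponential is then continued past the origin up to a point where its slope switches.

By scaling, the moment ratio attains its maximum over the two-sided exponential distributions. If
the rates `l`, `r` to the right and left of the centre `m` are both finite, then stationarity of the
logarithm of the ratio in `m`, `l` and `r` says that the integrals of a function
`h = A |x| ^ p + B |x| ^ q + C` and of its first-order perturbations against the two exponential
sides vanish. Such an `h` is even and negative on at most one interval of `[0, ∞)`, so counting its
sign changes leaves only `m = 0` and `l = r`; there the moments are those of `E` itself. In all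
other cases the maximiser is one-sided, hence a multiple of some `E + a` up to sign, or a point
mass.
-/

open MeasureTheory

/-- A real random variable (given by its distribution `μ`) is log-concave if it is
a.s. constant or has a density `f` w.r.t. Lebesgue measure satisfying
`f x ^ l * f y ^ (1 - l) ≤ f (l * x + (1 - l) * y)` for all `x y` and `l ∈ [0, 1]`. -/
def IsLogConcave (μ : Measure ℝ) : Prop :=
  IsProbabilityMeasure μ ∧
  ((∃ c : ℝ, μ = Measure.dirac c) ∨
   ∃ f : ℝ → ℝ, (∀ x, 0 ≤ f x) ∧
     μ = volume.withDensity (fun x => ENNReal.ofReal (f x)) ∧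
     ∀ x y l : ℝ, 0 ≤ l → l ≤ 1 → f x ^ l * f y ^ (1 - l) ≤ f (l * x + (1 - l) * y))

/-- The `s`-th moment norm `‖X‖ₛ = (E|X|^s)^(1/s)` of a random variable with
distribution `μ`. -/
noncomputable def momNorm (μ : Measure ℝ) (s : ℝ) : ℝ :=
  (∫ x, |x| ^ s ∂μ) ^ (1 / s)

/-- `‖E + a‖ₛ` for `E` exponential with parameter 1:
`(∫_0^∞ e^{-x} |x + a|^s dx)^{1/s}`. -/
noncomputable def expAddNorm (s a : ℝ) : ℝ :=
  (∫ x in Set.Ioi (0 : ℝ), Real.exp (-x) * |x + a| ^ s) ^ (1 / s)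

open Set Filter Topology

section SignChanges

variable {φ u ψ : ℝ → ℝ} {s : Set ℝ}

lemma exists_affine_chord (h : StrictConvexOn ℝ s ψ) {x y : ℝ} (hx : x ∈ s) (hy : y ∈ s)
    (hxy : x < y) : ∃ a b : ℝ, ψ x = a + b * x ∧ ψ y = a + b * y ∧
      (∀ z ∈ Ioo x y, ψ z < a + b * z) ∧
      ∀ z ∈ s, z ∉ Icc x y → a + b * z < ψ z := by
  obtain ⟨b, hb⟩ : ∃ b, (ψ y - ψ x) / (y - x) = b := ⟨_, rfl⟩
  have hb' : ψ y - ψ x = b * (y - x) := by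
    rw [← hb, div_mul_cancel₀ _ (sub_pos.2 hxy).ne']
  refine ⟨ψ x - b * x, b, by ring, by linarith, fun z ⟨hxz, hzy⟩ => ?_, fun z hz hzxy => ?_⟩
  · have := h.slope_strict_mono_adjacent hx hy hxz hzy
    rw [div_lt_div_iff₀ (by linarith) (by linarith)] at this
    nlinarith
  · rcases lt_or_ge z x with hzx | hxz
    · have := h.slope_strict_mono_adjacent hz hy hzx hxy
      rw [hb, div_lt_iff₀ (by linarith)] at this
      linarith
    · have hyz : y < z := lt_of_not_ge fun hzy => hzxy ⟨hxz, hzy⟩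
      have := h.slope_strict_mono_adjacent hx hz hxy hyz
      rw [hb, lt_div_iff₀ (by linarith)] at this
      linarith

lemma ae_eq_zero_of_sub_mul_nonneg {α : Type*} [MeasurableSpace α] {μ : Measure α}
    {φ u : α → ℝ} {k : ℝ} (hφ : Integrable φ μ) (huφ : Integrable (fun t => u t * φ t) μ)
    (h0 : ∫ t, φ t ∂μ = 0) (h1 : ∫ t, u t * φ t ∂μ = 0)
    (hnonneg : ∀ᵐ t ∂μ, 0 ≤ (u t - k) * φ t) (hne : ∀ᵐ t ∂μ, u t ≠ k) : φ =ᵐ[μ] 0 := by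
  have hsub : (fun t => (u t - k) * φ t) = fun t => u t * φ t - k * φ t := by
    funext t; ring
  have hinteg : Integrable (fun t => (u t - k) * φ t) μ := hsub ▸ huφ.sub (hφ.const_mul k)
  have hzero : ∫ t, (u t - k) * φ t ∂μ = 0 := by
    rw [hsub, integral_sub huφ (hφ.const_mul k), integral_const_mul, h0, h1, mul_zero, sub_zero]
  filter_upwards [(integral_eq_zero_iff_of_nonneg_ae hnonneg hinteg).1 hzero, hne] with t ht htk
  exact (mul_eq_zero.1 ht).resolve_left (sub_ne_zero.2 htk)

lemma ae_restrict_Ioi_zero_and_ne (c : ℝ) :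
    ∀ᵐ t ∂volume.restrict (Ioi (0 : ℝ)), 0 < t ∧ t ≠ c :=
  (ae_restrict_mem measurableSet_Ioi).and (ae_restrict_of_ae (Measure.ae_ne volume c))

lemma ae_eq_zero_of_sign_change {c : ℝ} (hu : StrictMonoOn u (Ici 0))
    (hφ : IntegrableOn φ (Ioi 0)) (huφ : IntegrableOn (fun t => u t * φ t) (Ioi 0))
    (h0 : ∫ t in Ioi 0, φ t = 0) (h1 : ∫ t in Ioi 0, u t * φ t = 0) (hc : 0 ≤ c)
    (hlt : ∀ t, 0 < t → t < c → φ t ≤ 0) (hgt : ∀ t, c < t → 0 ≤ φ t) :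
    φ =ᵐ[volume.restrict (Ioi 0)] 0 := by
  refine ae_eq_zero_of_sub_mul_nonneg (k := u c) hφ huφ h0 h1 ?_ ?_
  · filter_upwards [ae_restrict_Ioi_zero_and_ne c] with t ⟨ht, htc⟩
    rcases lt_or_gt_of_ne htc with h | h
    · exact mul_nonneg_of_nonpos_of_nonpos (sub_nonpos.2 (hu ht.le hc h).le) (hlt t ht h)
    · exact mul_nonneg (sub_nonneg.2 (hu hc ht.le h).le) (hgt t h)
  · filter_upwards [ae_restrict_Ioi_zero_and_ne c] with t ⟨ht, htc⟩
    exact fun h => htc (hu.injOn ht.le hc h)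

lemma ae_eq_zero_of_sign_change_neg {c : ℝ} (hu : StrictMonoOn u (Ici 0))
    (hφ : IntegrableOn φ (Ioi 0)) (huφ : IntegrableOn (fun t => u t * φ t) (Ioi 0))
    (h0 : ∫ t in Ioi 0, φ t = 0) (h1 : ∫ t in Ioi 0, u t * φ t = 0) (hc : 0 ≤ c)
    (hlt : ∀ t, 0 < t → t < c → 0 ≤ φ t) (hgt : ∀ t, c < t → φ t ≤ 0) :
    φ =ᵐ[volume.restrict (Ioi 0)] 0 := by
  have hneg := ae_eq_zero_of_sign_change (φ := -φ) hu hφ.neg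
    (by simpa only [Pi.neg_apply, mul_neg, IntegrableOn] using Integrable.fun_neg huφ)
    (by simp only [Pi.neg_apply, integral_neg, h0, neg_zero])
    (by simp only [Pi.neg_apply, mul_neg, integral_neg, h1, neg_zero]) hc
    (fun t ht h => neg_nonpos.2 (hlt t ht h)) (fun t h => neg_nonneg.2 (hgt t h))
  exact hneg.mono fun t ht => neg_eq_zero.1 ht

lemma ae_eq_zero_of_nonneg_of_ne {c : ℝ} (hφ : IntegrableOn φ (Ioi 0))
    (h0 : ∫ t in Ioi 0, φ t = 0) (h : ∀ t, 0 < t → t ≠ c → 0 ≤ φ t) :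
    φ =ᵐ[volume.restrict (Ioi 0)] 0 :=
  (integral_eq_zero_iff_of_nonneg_ae
    ((ae_restrict_Ioi_zero_and_ne c).mono fun t ht => h t ht.1 ht.2) hφ).1 h0

lemma ae_eq_zero_or_exists_sign_changes (hu : StrictMonoOn u (Ici 0))
    (hφ : IntegrableOn φ (Ioi 0)) (huφ : IntegrableOn (fun t => u t * φ t) (Ioi 0))
    (h0 : ∫ t in Ioi 0, φ t = 0) (h1 : ∫ t in Ioi 0, u t * φ t = 0)
    (hneg : OrdConnected {t | 0 < t ∧ φ t < 0}) :
    φ =ᵐ[volume.restrict (Ioi 0)] 0 ∨ ∃ x y, 0 < x ∧ x < y ∧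
      (∀ t ∈ Ioo x y, φ t < 0) ∧ ∀ t, 0 < t → t ∉ Icc x y → 0 ≤ φ t := by
  set S := {t | 0 < t ∧ φ t < 0}
  have hnonneg : ∀ t, 0 < t → t ∉ S → 0 ≤ φ t := fun t ht htS =>
    not_lt.1 fun h => htS ⟨ht, h⟩
  rcases S.eq_empty_or_nonempty with hempty | hne
  · exact .inl (ae_eq_zero_of_nonneg_of_ne (c := 0) hφ h0 fun t ht _ =>
      hnonneg t ht (hempty ▸ notMem_empty t))
  have hconn : IsConnected S := ⟨hne, hneg.isPreconnected⟩
  have hbelow : BddBelow S := ⟨0, fun t ht => ht.1.le⟩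
  have hinf : 0 ≤ sInf S := le_csInf hne fun t ht => ht.1.le
  have left : ∀ t, 0 < t → t < sInf S → 0 ≤ φ t := fun t ht h =>
    hnonneg t ht (notMem_of_lt_csInf h hbelow)
  by_cases habove : BddAbove S
  · have hle := csInf_le_csSup hne hbelow habove
    have right : ∀ t, sSup S < t → 0 ≤ φ t := fun t h =>
      hnonneg t (hinf.trans_lt (hle.trans_lt h)) (notMem_of_csSup_lt h habove)
    have mid : ∀ t ∈ Ioo (sInf S) (sSup S), φ t < 0 := fun t ht =>
      (hconn.Ioo_csInf_csSup_subset hbelow habove ht).2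
    rcases hinf.eq_or_lt with hinf0 | hinf0
    · exact .inl (ae_eq_zero_of_sign_change hu hφ huφ h0 h1 (hinf.trans hle)
        (fun t ht h => (mid t ⟨hinf0 ▸ ht, h⟩).le) right)
    rcases hle.eq_or_lt with heq | hlt
    · refine .inl (ae_eq_zero_of_nonneg_of_ne (c := sInf S) hφ h0 fun t ht htS => ?_)
      rcases lt_or_gt_of_ne htS with h | h
      exacts [left t ht h, right t (heq ▸ h)]
    · refine .inr ⟨sInf S, sSup S, hinf0, hlt, mid, fun t ht htS => ?_⟩
      rcases lt_or_ge t (sInf S) with h | h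
      exacts [left t ht h, right t (lt_of_not_ge fun h' => htS ⟨h, h'⟩)]
  · exact .inl (ae_eq_zero_of_sign_change_neg hu hφ huφ h0 h1 hinf left fun t h =>
      (hconn.isPreconnected.Ioi_csInf_subset hbelow habove h).2.le)

lemma exists_affine_sub_mul_nonneg (hψ : StrictConvexOn ℝ s ψ) (hu : StrictMonoOn u (Ici 0))
    (hus : MapsTo u (Ici 0) s) {x y : ℝ} (hx : 0 < x) (hxy : x < y)
    (hmid : ∀ t ∈ Ioo x y, φ t < 0) (hout : ∀ t, 0 < t → t ∉ Icc x y → 0 ≤ φ t) :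
    ∃ a b : ℝ, (∀ t ∈ Ioo x y, 0 < (ψ (u t) - (a + b * u t)) * φ t) ∧
      ∀ t ∈ Ioi (0 : ℝ), 0 ≤ (ψ (u t) - (a + b * u t)) * φ t := by
  have hy : 0 < y := hx.trans hxy
  obtain ⟨a, b, hax, hay, hin, hoff⟩ :=
    exists_affine_chord hψ (hus hx.le) (hus hy.le) (hu hx.le hy.le hxy)
  have hpos : ∀ t ∈ Ioo x y, 0 < (ψ (u t) - (a + b * u t)) * φ t := fun t ht =>
    have ht0 : (0 : ℝ) ≤ t := (hx.trans ht.1).le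
    mul_pos_of_neg_of_neg (sub_neg.2 (hin _ ⟨hu hx.le ht0 ht.1, hu ht0 hy.le ht.2⟩))
      (hmid t ht)
  refine ⟨a, b, hpos, fun t ht => ?_⟩
  have ht0 : (0 : ℝ) ≤ t := (mem_Ioi.1 ht).le
  rcases eq_or_ne t x with rfl | htx
  · simp [hax]
  rcases eq_or_ne t y with rfl | hty
  · simp [hay]
  by_cases htxy : t ∈ Icc x y
  · exact (hpos t ⟨lt_of_le_of_ne htxy.1 htx.symm, lt_of_le_of_ne htxy.2 hty⟩).le
  · refine mul_nonneg (sub_nonneg.2 (hoff _ (hus ht0) fun h => htxy ?_).le) (hout t ht htxy)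
    exact ⟨(hu.le_iff_le hx.le ht0).1 h.1, (hu.le_iff_le ht0 hy.le).1 h.2⟩

lemma ae_eq_zero_or_integral_comp_mul_pos (hψ : StrictConvexOn ℝ s ψ)
    (hu : StrictMonoOn u (Ici 0)) (hus : MapsTo u (Ici 0) s)
    (hφ : IntegrableOn φ (Ioi 0)) (huφ : IntegrableOn (fun t => u t * φ t) (Ioi 0))
    (hψφ : IntegrableOn (fun t => ψ (u t) * φ t) (Ioi 0))
    (h0 : ∫ t in Ioi 0, φ t = 0) (h1 : ∫ t in Ioi 0, u t * φ t = 0)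
    (hneg : OrdConnected {t | 0 < t ∧ φ t < 0}) :
    φ =ᵐ[volume.restrict (Ioi 0)] 0 ∨ 0 < ∫ t in Ioi 0, ψ (u t) * φ t := by
  refine (ae_eq_zero_or_exists_sign_changes hu hφ huφ h0 h1 hneg).imp_right ?_
  rintro ⟨x, y, hx, hxy, hmid, hout⟩
  -- Replacing `ψ` by its difference to the chord through the two sign changes keeps the integral.
  obtain ⟨a, b, hpos, hnonneg⟩ := exists_affine_sub_mul_nonneg hψ hu hus hx hxy hmid hout
  have haff : IntegrableOn (fun t => a * φ t + b * (u t * φ t)) (Ioi 0) :=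
    (hφ.const_mul a).add (huφ.const_mul b)
  have hsub : (fun t => (ψ (u t) - (a + b * u t)) * φ t) =
      fun t => ψ (u t) * φ t - (a * φ t + b * (u t * φ t)) := by
    funext t; ring
  have hinteg : IntegrableOn (fun t => (ψ (u t) - (a + b * u t)) * φ t) (Ioi 0) :=
    hsub ▸ hψφ.sub haff
  have heq : ∫ t in Ioi 0, ψ (u t) * φ t = ∫ t in Ioi 0, (ψ (u t) - (a + b * u t)) * φ t := by
    rw [hsub, integral_sub hψφ haff, integral_add (hφ.const_mul a) (huφ.const_mul b),
      integral_const_mul, integral_const_mul, h0, h1, mul_zero, mul_zero, add_zero, sub_zero]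
  rw [heq, setIntegral_pos_iff_support_of_nonneg_ae (ae_restrict_of_forall_mem
    measurableSet_Ioi hnonneg) hinteg]
  refine lt_of_lt_of_le ?_ (measure_mono (s := Ioo x y) fun t ht =>
    ⟨(hpos t ht).ne', hx.trans ht.1⟩)
  simpa using hxy

lemma ae_eq_zero_of_neg_downward_closed (hu : StrictMonoOn u (Ici 0))
    (hφ : IntegrableOn φ (Ioi 0)) (huφ : IntegrableOn (fun t => u t * φ t) (Ioi 0))
    (h0 : ∫ t in Ioi 0, φ t = 0) (h1 : ∫ t in Ioi 0, u t * φ t = 0)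
    (hneg : ∀ x y, 0 < x → x < y → φ y < 0 → φ x < 0) :
    φ =ᵐ[volume.restrict (Ioi 0)] 0 := by
  refine (ae_eq_zero_or_exists_sign_changes hu hφ huφ h0 h1 ⟨?_⟩).resolve_right ?_
  · rintro x ⟨hx, -⟩ y ⟨hy, hφy⟩ z ⟨hxz, hzy⟩
    rcases hzy.eq_or_lt with rfl | hzy
    exacts [⟨hy, hφy⟩, ⟨hx.trans_le hxz, hneg z y (hx.trans_le hxz) hzy hφy⟩]
  · rintro ⟨x, y, hx, hxy, hmid, hout⟩
    obtain ⟨z, hxz, hzy⟩ := exists_between hxy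
    have h := hneg (x / 2) z (by linarith) (by linarith) (hmid z ⟨hxz, hzy⟩)
    exact absurd (hout (x / 2) (by linarith) fun h => by linarith [h.1]) (not_le.2 h)

end SignChanges

section Translation

variable (F : ℝ → ℝ) (a b : ℝ)

lemma integrableOn_Ioi_comp_add_right_iff :
    IntegrableOn (fun x => F (x + b)) (Ioi a) ↔ IntegrableOn F (Ioi (a + b)) := by
  have := (measurePreserving_add_right volume b).integrableOn_comp_preimage
    (measurableEmbedding_addRight b) (f := F) (s := Ioi (a + b))
  rwa [preimage_add_const_Ioi, add_sub_cancel_right] at this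

lemma integral_Ioi_comp_add_right : ∫ x in Ioi a, F (x + b) = ∫ x in Ioi (a + b), F x := by
  have := (measurePreserving_add_right volume b).setIntegral_preimage_emb
    (measurableEmbedding_addRight b) F (Ioi (a + b))
  rwa [preimage_add_const_Ioi, add_sub_cancel_right] at this

end Translation

/-- The Laplace transform of `h`, with a real argument. -/
noncomputable def laplace (h : ℝ → ℝ) (l : ℝ) : ℝ := ∫ y in Ioi 0, Real.exp (-(l * y)) * h y

lemma exp_mul_comp_add (h : ℝ → ℝ) (l a y : ℝ) : Real.exp (-(l * y)) * h (y + a) =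
    Real.exp (l * a) * (Real.exp (-(l * (y + a))) * h (y + a)) := by
  rw [← mul_assoc, ← Real.exp_add]
  ring_nf

lemma norm_id_mul_exp_le {l r y : ℝ} (hl : 0 < l) (hr : l ≤ r) (hy : 0 < y) (c : ℝ) :
    ‖y * (Real.exp (-(r * y)) * c)‖ ≤ 2 / l * ‖Real.exp (-(l / 2 * y)) * c‖ := by
  have hexp : l / 2 * y ≤ Real.exp (l / 2 * y) :=
    (le_add_of_nonneg_right zero_le_one).trans (Real.add_one_le_exp _)
  have hmul : y * Real.exp (-(r * y)) ≤ 2 / l * Real.exp (-(l / 2 * y)) :=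
    calc y * Real.exp (-(r * y)) ≤ y * Real.exp (-(l * y)) := by gcongr
      _ = 2 / l * (l / 2 * y) * Real.exp (-(l * y)) := by field_simp
      _ ≤ 2 / l * Real.exp (l / 2 * y) * Real.exp (-(l * y)) := by gcongr
      _ = 2 / l * Real.exp (-(l / 2 * y)) := by
          rw [mul_assoc, ← Real.exp_add]
          ring_nf
  rw [← mul_assoc, norm_mul, norm_mul _ c, ← mul_assoc, Real.norm_of_nonneg (by positivity),
    Real.norm_of_nonneg (Real.exp_pos _).le]
  exact mul_le_mul_of_nonneg_right hmul (norm_nonneg c)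

/-- Continuous functions whose Laplace transform converges on the whole open half-line. They are
required to be defined and continuous on all of `ℝ` so that the class is closed under translations
in both directions. -/
structure HasLaplace (h : ℝ → ℝ) : Prop where
  continuous : Continuous h
  integrableOn : ∀ l, 0 < l → IntegrableOn (fun y => Real.exp (-(l * y)) * h y) (Ioi 0)

namespace HasLaplace

variable {h k : ℝ → ℝ} {l : ℝ}

lemma continuous_exp_mul (hh : HasLaplace h) (l : ℝ) :
    Continuous fun y => Real.exp (-(l * y)) * h y := by
  have := hh.continuous
  fun_prop

lemma add (hh : HasLaplace h) (hk : HasLaplace k) : HasLaplace fun y => h y + k y where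
  continuous := hh.continuous.add hk.continuous
  integrableOn l hl := by
    simpa only [mul_add] using (hh.integrableOn l hl).fun_add (hk.integrableOn l hl)

lemma const_mul (hh : HasLaplace h) (c : ℝ) : HasLaplace fun y => c * h y where
  continuous := hh.continuous.const_mul c
  integrableOn l hl := by
    simpa only [mul_left_comm, IntegrableOn] using (hh.integrableOn l hl).const_mul c

lemma abs_rpow {s : ℝ} (hs : 0 ≤ s) : HasLaplace fun y => |y| ^ s where
  continuous := continuous_abs.rpow_const fun _ => .inr hs
  integrableOn l hl := by
    refine (integrableOn_rpow_mul_exp_neg_mul_rpow (s := s) (by linarith) one_pos hl).congr_fun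
      (fun y hy => ?_) measurableSet_Ioi
    simp only [Real.rpow_one, neg_mul, abs_of_pos (mem_Ioi.1 hy), mul_comm (y ^ s)]

lemma const (c : ℝ) : HasLaplace fun _ => c := by
  simpa using (abs_rpow le_rfl).const_mul c

lemma integrableOn_Ioi (hh : HasLaplace h) (hl : 0 < l) (a : ℝ) :
    IntegrableOn (fun y => Real.exp (-(l * y)) * h y) (Ioi a) := by
  refine ((hh.continuous_exp_mul l).integrableOn_Icc.union (hh.integrableOn l hl)).mono_set
    (t := Icc a 0 ∪ Ioi 0) fun x hx => ?_
  rcases le_or_gt x 0 with h0 | h0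
  exacts [.inl ⟨(mem_Ioi.1 hx).le, h0⟩, .inr h0]

lemma comp_add_right (hh : HasLaplace h) (a : ℝ) : HasLaplace fun y => h (y + a) where
  continuous := hh.continuous.comp (continuous_add_const a)
  integrableOn l hl := by
    have := (integrableOn_Ioi_comp_add_right_iff _ 0 a).2 (hh.integrableOn_Ioi hl (0 + a))
    simpa only [exp_mul_comp_add h l a, IntegrableOn] using this.const_mul (Real.exp (l * a))

lemma id_mul (hh : HasLaplace h) : HasLaplace fun y => y * h y where
  continuous := continuous_id.mul hh.continuous
  integrableOn l hl := by
    refine ((hh.integrableOn (l / 2) (half_pos hl)).norm.const_mul (2 / l)).mono'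
      ((by fun_prop : Continuous fun y => Real.exp (-(l * y))).mul
        (continuous_id.mul hh.continuous)).aestronglyMeasurable ?_
    filter_upwards [ae_restrict_mem measurableSet_Ioi] with y hy
    rw [mul_left_comm]
    exact norm_id_mul_exp_le hl le_rfl hy (h y)

lemma laplace_add (hh : HasLaplace h) (hk : HasLaplace k) (hl : 0 < l) :
    laplace (fun y => h y + k y) l = laplace h l + laplace k l := by
  simp only [laplace, mul_add]
  exact integral_add (hh.integrableOn l hl) (hk.integrableOn l hl)

lemma laplace_eq_integral_add (hh : HasLaplace h) (hl : 0 < l) (a : ℝ) :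
    laplace h l = (∫ y in (0 : ℝ)..a, Real.exp (-(l * y)) * h y) +
      Real.exp (-(l * a)) * laplace (fun y => h (y + a)) l := by
  have hshift : laplace (fun y => h (y + a)) l =
      Real.exp (l * a) * ∫ y in Ioi a, Real.exp (-(l * y)) * h y := by
    simp only [laplace, exp_mul_comp_add h l a]
    rw [integral_const_mul,
      integral_Ioi_comp_add_right (fun y => Real.exp (-(l * y)) * h y) 0 a, zero_add]
  rw [hshift, ← mul_assoc, ← Real.exp_add, neg_add_cancel, Real.exp_zero, one_mul, laplace,
    intervalIntegral.integral_interval_add_Ioi (hh.integrableOn l hl) (hh.integrableOn_Ioi hl a)]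

lemma hasDerivAt_laplace (hh : HasLaplace h) (hl : 0 < l) :
    HasDerivAt (laplace h) (-laplace (fun y => y * h y) l) l := by
  have hderiv := (hasDerivAt_integral_of_dominated_loc_of_deriv_le
    (μ := volume.restrict (Ioi (0 : ℝ))) (F := fun r y => Real.exp (-(r * y)) * h y)
    (F' := fun r y => -(y * (Real.exp (-(r * y)) * h y)))
    (bound := fun y => 2 / (l / 2) * ‖Real.exp (-(l / 2 / 2 * y)) * h y‖)
    (Ioi_mem_nhds (half_lt_self hl))
    (.of_forall fun r => (hh.continuous_exp_mul r).aestronglyMeasurable)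
    (hh.integrableOn l hl)
    (continuous_id.mul (hh.continuous_exp_mul l)).neg.aestronglyMeasurable ?_
    ((hh.integrableOn _ (by positivity)).norm.const_mul _)
    (.of_forall fun y r _ => ?_)).2
  · rw [integral_neg] at hderiv
    unfold laplace
    simpa only [mul_left_comm] using hderiv
  · filter_upwards [ae_restrict_mem measurableSet_Ioi] with y hy r hr
    rw [norm_neg]
    exact norm_id_mul_exp_le (half_pos hl) (mem_Ioi.1 hr).le hy (h y)
  · exact (((hasDerivAt_id' r).mul_const y).fun_neg.exp.mul_const (h y)).congr_deriv (by ring)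

lemma hasDerivAt_laplace_comp_add (hh : HasLaplace h) (hl : 0 < l) (a : ℝ) :
    HasDerivAt (fun a => laplace (fun y => h (y + a)) l)
      (l * laplace (fun y => h (y + a)) l - h a) a := by
  have heq : (fun a => laplace (fun y => h (y + a)) l) = fun a =>
      Real.exp (l * a) * (laplace h l - ∫ y in (0 : ℝ)..a, Real.exp (-(l * y)) * h y) := by
    funext a
    rw [hh.laplace_eq_integral_add hl a, add_sub_cancel_left, ← mul_assoc, ← Real.exp_add,
      add_neg_cancel, Real.exp_zero, one_mul]
  have hexp : HasDerivAt (fun a => Real.exp (l * a)) (Real.exp (l * a) * l) a := by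
    simpa using ((hasDerivAt_id a).const_mul l).exp
  have hinteg := (hh.continuous_exp_mul l).integral_hasStrictDerivAt 0 a |>.hasDerivAt
  have hcancel : Real.exp (l * a) * Real.exp (-(l * a)) = 1 := by
    rw [← Real.exp_add, add_neg_cancel, Real.exp_zero]
  rw [heq, congrFun heq a]
  refine (hexp.mul (hinteg.const_sub (laplace h l))).congr_deriv ?_
  linear_combination (-h a) * hcancel

end HasLaplace

lemma laplace_const_mul (c : ℝ) (h : ℝ → ℝ) (l : ℝ) :
    laplace (fun y => c * h y) l = c * laplace h l := by
  simp only [laplace, mul_left_comm _ c, integral_const_mul]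

/-- The absolute moment `E|α E + a|^s` of an affine image of a standard exponential variable. -/
noncomputable def expMoment (s a α : ℝ) : ℝ := ∫ x in Ioi 0, Real.exp (-x) * |α * x + a| ^ s

section ExpMoment

variable {s : ℝ}

lemma continuous_abs_affine_rpow (hs : 0 ≤ s) :
    Continuous fun z : ℝ × ℝ × ℝ => |z.2.1 * z.2.2 + z.1| ^ s :=
  (by fun_prop : Continuous fun z : ℝ × ℝ × ℝ => |z.2.1 * z.2.2 + z.1|).rpow_const
    fun _ => .inr hs

lemma continuous_expMoment_integrand (hs : 0 ≤ s) (a α : ℝ) :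
    Continuous fun x => Real.exp (-x) * |α * x + a| ^ s :=
  Real.continuous_exp.comp continuous_neg |>.mul <| (continuous_abs_affine_rpow hs).comp
    (f := fun x : ℝ => (a, α, x)) (by fun_prop)

lemma abs_affine_rpow_le {C a α x : ℝ} (hs : 0 ≤ s) (ha : |a| ≤ C) (hα : |α| ≤ C) (hx : 0 < x) :
    |α * x + a| ^ s ≤ C ^ s * |x + 1| ^ s := by
  rw [← Real.mul_rpow ((abs_nonneg a).trans ha) (abs_nonneg _),
    abs_of_pos (by linarith : 0 < x + 1)]
  refine Real.rpow_le_rpow (abs_nonneg _) ?_ hs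
  calc |α * x + a| ≤ |α| * x + |a| := by
        simpa only [abs_mul, abs_of_pos hx] using abs_add_le (α * x) a
    _ ≤ C * x + C := by gcongr
    _ = C * (x + 1) := by ring

lemma integrableOn_exp_mul_const_mul_abs_rpow (hs : 0 ≤ s) (C : ℝ) :
    IntegrableOn (fun x => Real.exp (-x) * (C * |x + 1| ^ s)) (Ioi 0) := by
  simpa using (((HasLaplace.abs_rpow hs).comp_add_right 1).const_mul C).integrableOn 1 one_pos

lemma integrableOn_expMoment_integrand (hs : 0 ≤ s) (a α : ℝ) :
    IntegrableOn (fun x => Real.exp (-x) * |α * x + a| ^ s) (Ioi 0) := by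
  refine (integrableOn_exp_mul_const_mul_abs_rpow hs (max |a| |α| ^ s)).mono'
    (continuous_expMoment_integrand hs a α).aestronglyMeasurable ?_
  filter_upwards [ae_restrict_mem measurableSet_Ioi] with x hx
  rw [Real.norm_of_nonneg (by positivity)]
  gcongr
  exact abs_affine_rpow_le hs (le_max_left _ _) (le_max_right _ _) hx

lemma continuous_expMoment (hs : 0 ≤ s) : Continuous fun z : ℝ × ℝ => expMoment s z.1 z.2 := by
  refine continuous_iff_continuousAt.2 fun z => ?_
  have hbound : ∀ᶠ w in 𝓝 z, |w.1| < max |z.1| |z.2| + 1 ∧ |w.2| < max |z.1| |z.2| + 1 := by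
    refine .and ?_ ?_
    · exact (continuous_fst.abs.tendsto z).eventually_lt_const
        (lt_add_of_le_of_pos (le_max_left _ _) one_pos)
    · exact (continuous_snd.abs.tendsto z).eventually_lt_const
        (lt_add_of_le_of_pos (le_max_right _ _) one_pos)
  refine continuousAt_of_dominated
    (bound := fun x => Real.exp (-x) * ((max |z.1| |z.2| + 1) ^ s * |x + 1| ^ s))
    (.of_forall fun w => (continuous_expMoment_integrand hs w.1 w.2).aestronglyMeasurable) ?_
    (integrableOn_exp_mul_const_mul_abs_rpow hs _) (.of_forall fun x => ?_)
  · filter_upwards [hbound] with w hw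
    filter_upwards [ae_restrict_mem measurableSet_Ioi] with x hx
    rw [Real.norm_of_nonneg (by positivity)]
    gcongr
    exact abs_affine_rpow_le hs hw.1.le hw.2.le hx
  · exact (continuous_const.mul <| (continuous_abs_affine_rpow hs).comp
      (f := fun w : ℝ × ℝ => (w.1, w.2, x)) (by fun_prop)).continuousAt

lemma expMoment_mul {c : ℝ} (hc : 0 ≤ c) (a α : ℝ) :
    expMoment s (c * a) (c * α) = c ^ s * expMoment s a α := by
  simp only [expMoment, ← integral_const_mul, mul_assoc, ← mul_add, abs_mul, abs_of_nonneg hc,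
    Real.mul_rpow hc (abs_nonneg _), mul_left_comm]

lemma expMoment_zero_right (s a : ℝ) : expMoment s a 0 = |a| ^ s := by
  simp only [expMoment, zero_mul, zero_add, integral_mul_const, integral_exp_neg_Ioi_zero, one_mul]

lemma expMoment_zero_left (a α : ℝ) : expMoment 0 a α = 1 := by
  simp only [expMoment, Real.rpow_zero, mul_one, integral_exp_neg_Ioi_zero]

lemma expMoment_center {α : ℝ} (hs : 0 < s) (hα : 0 ≤ α) :
    expMoment s 0 α = α ^ s * Real.Gamma (s + 1) := by
  have hscale := expMoment_mul (s := s) hα 0 1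
  rw [mul_zero, mul_one] at hscale
  rw [hscale, Real.Gamma_eq_integral (by positivity), expMoment]
  congr 1
  refine setIntegral_congr_fun measurableSet_Ioi fun x hx => ?_
  simp only [one_mul, add_zero, add_sub_cancel_right, abs_of_pos (mem_Ioi.1 hx)]

lemma expMoment_nonneg (s a α : ℝ) : 0 ≤ expMoment s a α :=
  setIntegral_nonneg measurableSet_Ioi fun _ _ => by positivity

lemma expMoment_pos (hs : 0 < s) {a α : ℝ} (h : a ≠ 0 ∨ α ≠ 0) : 0 < expMoment s a α := by
  refine (expMoment_nonneg s a α).lt_of_ne' fun h0 => ?_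
  have hae := (setIntegral_eq_zero_iff_of_nonneg_ae (.of_forall fun x => by positivity)
    (integrableOn_expMoment_integrand hs.le a α)).1 h0
  have hzero := Measure.eqOn_open_of_ae_eq hae isOpen_Ioi
    (continuous_expMoment_integrand hs.le a α).continuousOn continuousOn_const
  have hroot : ∀ x, 0 < x → α * x + a = 0 := fun x hx => by
    simpa [Real.rpow_eq_zero_iff_of_nonneg, hs.ne'] using hzero (mem_Ioi.2 hx)
  have h1 := hroot 1 one_pos
  have h2 := hroot 2 two_pos
  rcases h with h | h
  · exact h (by linarith)
  · exact h (by linarith)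

lemma laplace_abs_add_rpow {l : ℝ} (hl : 0 < l) (s a : ℝ) :
    laplace (fun y => |y + a| ^ s) l = l⁻¹ * expMoment s a l⁻¹ := by
  have := integral_comp_mul_left_Ioi (fun x => Real.exp (-x) * |l⁻¹ * x + a| ^ s) 0 hl
  simpa only [laplace, expMoment, mul_zero, inv_mul_cancel_left₀ hl.ne', smul_eq_mul] using this

end ExpMoment

lemma expAddNorm_eq (s a : ℝ) : expAddNorm s a = expMoment s a 1 ^ (1 / s) := by
  simp only [expAddNorm, expMoment, one_mul]

/-- The `s`-th moment of the part on the positive half-line of a measure with density `F`. -/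
noncomputable def rightMoment (s : ℝ) (F : ℝ → ℝ) : ℝ := ∫ t in Ioi 0, t ^ s * F t

/-- Functions all of whose moments of nonnegative order on the positive half-line converge. -/
def HasRightMoments (F : ℝ → ℝ) : Prop :=
  ∀ s : ℝ, 0 ≤ s → IntegrableOn (fun t => t ^ s * F t) (Ioi 0)

section RightMoment

variable {F G : ℝ → ℝ} {p q s : ℝ}

lemma rightMoment_zero (F : ℝ → ℝ) : rightMoment 0 F = ∫ t in Ioi 0, F t := by
  simp only [rightMoment, Real.rpow_zero, one_mul]

lemma HasRightMoments.integrableOn (hF : HasRightMoments F) : IntegrableOn F (Ioi 0) := by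
  simpa using hF 0 le_rfl

lemma HasRightMoments.sub (hF : HasRightMoments F) (hG : HasRightMoments G) :
    HasRightMoments fun t => F t - G t := fun s hs => by
  simpa only [mul_sub, IntegrableOn] using (hF s hs).fun_sub (hG s hs)

lemma rightMoment_sub (hF : HasRightMoments F) (hG : HasRightMoments G) (hs : 0 ≤ s) :
    rightMoment s (fun t => F t - G t) = rightMoment s F - rightMoment s G := by
  simp only [rightMoment, mul_sub]
  exact integral_sub (hF s hs) (hG s hs)

lemma rightMoment_nonneg (hF : ∀ t, 0 ≤ F t) (s : ℝ) : 0 ≤ rightMoment s F :=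
  setIntegral_nonneg measurableSet_Ioi fun t ht =>
    mul_nonneg (Real.rpow_nonneg (mem_Ioi.1 ht).le s) (hF t)

lemma rightMoment_eq_zero_iff (hF : ∀ t, 0 ≤ F t) (hF' : HasRightMoments F) (hs : 0 ≤ s) :
    rightMoment s F = 0 ↔ F =ᵐ[volume.restrict (Ioi 0)] 0 := by
  rw [rightMoment, setIntegral_eq_zero_iff_of_nonneg_ae (ae_restrict_of_forall_mem
    measurableSet_Ioi fun t ht => mul_nonneg (Real.rpow_nonneg (mem_Ioi.1 ht).le s) (hF t))
    (hF' s hs)]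
  refine eventually_congr ?_
  filter_upwards [ae_restrict_mem measurableSet_Ioi] with t ht
  simp [(Real.rpow_pos_of_pos ht s).ne']

lemma rightMoment_le (hF : HasRightMoments F) (hG : HasRightMoments G) (hq : 0 < q) (hpq : q < p)
    (h0 : rightMoment 0 F = rightMoment 0 G) (h1 : rightMoment q F = rightMoment q G)
    (hlt : OrdConnected {t | 0 < t ∧ G t < F t}) : rightMoment p F ≤ rightMoment p G := by
  have hp := hq.trans hpq
  have hφ := hG.sub hF
  have hpow : ∀ t ∈ Ioi (0 : ℝ), t ^ p * (G t - F t) = (t ^ q) ^ (p / q) * (G t - F t) :=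
    fun t ht => by rw [← Real.rpow_mul (mem_Ioi.1 ht).le, mul_div_cancel₀ p hq.ne']
  have h := ae_eq_zero_or_integral_comp_mul_pos
    (strictConvexOn_rpow ((one_lt_div hq).2 hpq)) (Real.strictMonoOn_rpow_Ici_of_exponent_pos hq)
    (fun t ht => Real.rpow_nonneg ht q) hφ.integrableOn (hφ q hq.le)
    ((hφ p hp.le).congr_fun hpow measurableSet_Ioi)
    (by rw [← rightMoment_zero, rightMoment_sub hG hF le_rfl, h0, sub_self])
    (by rw [← rightMoment, rightMoment_sub hG hF hq.le, h1, sub_self])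
    (by simpa only [sub_neg] using hlt)
  rw [← setIntegral_congr_fun measurableSet_Ioi hpow, ← rightMoment,
    rightMoment_sub hG hF hp.le] at h
  rcases h with h | h
  · refine le_of_eq (setIntegral_congr_ae₀ nullMeasurableSet_Ioi ?_)
    filter_upwards [(ae_restrict_iff' measurableSet_Ioi).1 h] with t ht ht0
    rw [sub_eq_zero.1 (ht ht0)]
  · exact (sub_pos.1 h).le

lemma ae_eq_of_rightMoment_eq (hF : HasRightMoments F) (hG : HasRightMoments G) (hq : 0 < q)
    (h0 : rightMoment 0 F = rightMoment 0 G) (h1 : rightMoment q F = rightMoment q G)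
    (hlt : ∀ x y, 0 < x → x < y → G y < F y → G x < F x) :
    F =ᵐ[volume.restrict (Ioi 0)] G := by
  have hφ := hG.sub hF
  refine (ae_eq_zero_of_neg_downward_closed (Real.strictMonoOn_rpow_Ici_of_exponent_pos hq)
    hφ.integrableOn (hφ q hq.le) ?_ ?_ (by simpa only [sub_neg] using hlt)).mono
    fun t ht => (sub_eq_zero.1 ht).symm
  · rw [← rightMoment_zero, rightMoment_sub hG hF le_rfl, h0, sub_self]
  · rw [← rightMoment, rightMoment_sub hG hF hq.le, h1, sub_self]

lemma rightMoment_le_of_crossing {m : ℝ} (hF : HasRightMoments F) (hG : HasRightMoments G)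
    (hq : 0 ≤ q) (hm : 0 ≤ m) (h0 : rightMoment 0 F = rightMoment 0 G)
    (hle : ∀ t, 0 < t → t ≤ m → F t ≤ G t) (hge : ∀ t, m < t → G t ≤ F t) :
    rightMoment q G ≤ rightMoment q F := by
  have hφ := hF.sub hG
  have hpos : 0 ≤ ∫ t in Ioi 0, (t ^ q * (F t - G t) - m ^ q * (F t - G t)) := by
    refine setIntegral_nonneg measurableSet_Ioi fun t ht => ?_
    have ht : 0 < t := ht
    rw [← sub_mul]
    rcases le_or_gt t m with htm | htm
    · exact mul_nonneg_of_nonpos_of_nonpos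
        (sub_nonpos.2 (Real.rpow_le_rpow ht.le htm hq)) (sub_nonpos.2 (hle t ht htm))
    · exact mul_nonneg
        (sub_nonneg.2 (Real.rpow_le_rpow hm htm.le hq)) (sub_nonneg.2 (hge t htm))
  rw [integral_sub (hφ q hq) (hφ.integrableOn.const_mul _), integral_const_mul,
    ← rightMoment_zero fun t => F t - G t, ← rightMoment, rightMoment_sub hF hG le_rfl, h0,
    sub_self, mul_zero, sub_zero, rightMoment_sub hF hG hq] at hpos
  exact sub_nonneg.1 hpos

end RightMoment

/-- The density of `b E`, for `E` a standard exponential variable, scaled to total mass `M`. The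
convention `M / 0 = 0` makes it vanish identically when `b = 0`. -/
noncomputable def expDensity (M b t : ℝ) : ℝ := M / b * Real.exp (-(t / b))

section ExpDensity

variable {M b s : ℝ}

lemma expDensity_nonneg (hM : 0 ≤ M) (hb : 0 ≤ b) (t : ℝ) : 0 ≤ expDensity M b t := by
  unfold expDensity
  positivity

lemma expDensity_sub (M b m t : ℝ) :
    expDensity M b (t - m) = expDensity (M * Real.exp (m / b)) b t := by
  rw [expDensity, expDensity, sub_div, neg_sub, sub_eq_add_neg, Real.exp_add]
  ring

lemma expDensity_eq_mul_exp (M b t : ℝ) : expDensity M b t = M / b * Real.exp (-b⁻¹ * t) := by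
  rw [expDensity, neg_mul, div_eq_inv_mul t b]

lemma abs_rpow_mul_expDensity (M b s a t : ℝ) :
    |t + a| ^ s * expDensity M b t = M / b * (Real.exp (-(b⁻¹ * t)) * |t + a| ^ s) := by
  rw [expDensity_eq_mul_exp, neg_mul]
  ring

lemma integrableOn_abs_rpow_mul_expDensity (hs : 0 ≤ s) (hb : 0 ≤ b) (M a : ℝ) :
    IntegrableOn (fun t => |t + a| ^ s * expDensity M b t) (Ioi 0) := by
  rcases hb.eq_or_lt with rfl | hb
  · simp [expDensity]
  · simpa only [abs_rpow_mul_expDensity, IntegrableOn] using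
      (((HasLaplace.abs_rpow hs).comp_add_right a).integrableOn b⁻¹
        (inv_pos.2 hb)).const_mul (M / b)

lemma integral_abs_rpow_mul_expDensity (hb : 0 ≤ b) (hM : b = 0 → M = 0) (s a : ℝ) :
    ∫ t in Ioi 0, |t + a| ^ s * expDensity M b t = M * expMoment s a b := by
  rcases hb.eq_or_lt with rfl | hb
  · simp [expDensity, hM rfl]
  · simp only [abs_rpow_mul_expDensity, integral_const_mul]
    rw [← laplace, laplace_abs_add_rpow (inv_pos.2 hb), inv_inv, ← mul_assoc,
      div_mul_cancel₀ M hb.ne']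

lemma hasRightMoments_expDensity (hb : 0 ≤ b) (M : ℝ) : HasRightMoments (expDensity M b) :=
  fun s hs => (integrableOn_abs_rpow_mul_expDensity hs hb M 0).congr_fun
    (fun t ht => by simp only [add_zero, abs_of_pos (mem_Ioi.1 ht)]) measurableSet_Ioi

lemma rightMoment_expDensity (hb : 0 ≤ b) (hM : b = 0 → M = 0) (s : ℝ) :
    rightMoment s (expDensity M b) = M * expMoment s 0 b := by
  rw [← integral_abs_rpow_mul_expDensity hb hM]
  exact setIntegral_congr_fun measurableSet_Ioi fun t ht => by
    simp only [add_zero, abs_of_pos (mem_Ioi.1 ht)]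

lemma exists_mul_expMoment_eq {q M Q : ℝ} (hq : 0 < q) (hM : 0 < M) (hQ : 0 < Q) :
    ∃ b, 0 < b ∧ M * expMoment q 0 b = Q := by
  refine ⟨(Q / (M * Real.Gamma (q + 1))) ^ (1 / q), by positivity, ?_⟩
  rw [expMoment_center hq (by positivity), ← Real.rpow_mul (by positivity),
    one_div_mul_cancel hq.ne', Real.rpow_one]
  field_simp

end ExpDensity

section SplitAtPoint

variable (F : ℝ → ℝ) (m : ℝ)

lemma integrableOn_Iic_iff_comp_sub_left :
    IntegrableOn F (Iic m) ↔ IntegrableOn (fun y => F (m - y)) (Ioi 0) := by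
  have h := (Measure.measurePreserving_sub_left volume m).integrableOn_comp_preimage
    (Homeomorph.subLeft m).measurableEmbedding (f := F) (s := Iio m)
  rwa [preimage_const_sub_Iio, sub_self, ← integrableOn_Iic_iff_integrableOn_Iio, iff_comm] at h

lemma integral_Iic_eq_comp_sub_left : ∫ x in Iic m, F x = ∫ y in Ioi 0, F (m - y) := by
  have h := (Measure.measurePreserving_sub_left volume m).setIntegral_preimage_emb
    (Homeomorph.subLeft m).measurableEmbedding F (Iio m)
  rwa [preimage_const_sub_Iio, sub_self, ← integral_Iic_eq_integral_Iio, eq_comm] at h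

lemma integrable_iff_comp_add_right_and_comp_sub_left : Integrable F ↔
    IntegrableOn (fun y => F (y + m)) (Ioi 0) ∧ IntegrableOn (fun y => F (m - y)) (Ioi 0) := by
  rw [integrableOn_Ioi_comp_add_right_iff, zero_add, ← integrableOn_Iic_iff_comp_sub_left,
    ← integrableOn_union, union_comm, Iic_union_Ioi, integrableOn_univ]

variable {F}

lemma integral_eq_comp_add_right_add_comp_sub_left (hF : Integrable F) :
    ∫ x, F x = (∫ y in Ioi 0, F (y + m)) + ∫ y in Ioi 0, F (m - y) := by
  rw [integral_Ioi_comp_add_right, zero_add, ← integral_Iic_eq_comp_sub_left, add_comm,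
    ← integral_add_compl measurableSet_Iic hF, compl_Iic]

end SplitAtPoint

/-- The `s`-th absolute moment of a measure with density `f`. -/
noncomputable def absMoment (s : ℝ) (f : ℝ → ℝ) : ℝ := ∫ x, |x| ^ s * f x

/-- Functions all of whose absolute moments of nonnegative order converge. -/
def HasAbsMoments (f : ℝ → ℝ) : Prop := ∀ s : ℝ, 0 ≤ s → Integrable fun x => |x| ^ s * f x

section AbsMoment

variable {f : ℝ → ℝ} {s : ℝ}

lemma absMoment_zero (f : ℝ → ℝ) : absMoment 0 f = ∫ x, f x := by
  simp only [absMoment, Real.rpow_zero, one_mul]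

lemma absMoment_comp_neg (s : ℝ) (f : ℝ → ℝ) : absMoment s (fun x => f (-x)) = absMoment s f := by
  simpa only [absMoment, abs_neg] using integral_neg_eq_self (fun x => |x| ^ s * f x) volume

lemma absMoment_nonneg (hf : ∀ x, 0 ≤ f x) (s : ℝ) : 0 ≤ absMoment s f :=
  integral_nonneg fun x => mul_nonneg (by positivity) (hf x)

lemma HasAbsMoments.comp_neg (hf : HasAbsMoments f) : HasAbsMoments fun x => f (-x) :=
  fun s hs => by simpa only [abs_neg] using (hf s hs).comp_neg

lemma HasAbsMoments.hasRightMoments (hf : HasAbsMoments f) : HasRightMoments f := fun s hs =>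
  (hf s hs).integrableOn.congr_fun
    (fun t ht => by simp only [abs_of_pos (mem_Ioi.1 ht)]) measurableSet_Ioi

lemma HasRightMoments.hasAbsMoments (hf : HasRightMoments f)
    (hf' : HasRightMoments fun x => f (-x)) : HasAbsMoments f := fun s hs => by
  refine (integrable_iff_comp_add_right_and_comp_sub_left _ 0).2
    ⟨(hf s hs).congr_fun (fun t ht => ?_) measurableSet_Ioi,
      (hf' s hs).congr_fun (fun t ht => ?_) measurableSet_Ioi⟩
  · simp only [add_zero, abs_of_pos (mem_Ioi.1 ht)]
  · simp only [zero_sub, abs_neg, abs_of_pos (mem_Ioi.1 ht)]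

lemma HasAbsMoments.absMoment_eq_add (hf : HasAbsMoments f) (hs : 0 ≤ s) :
    absMoment s f = rightMoment s f + rightMoment s fun x => f (-x) := by
  rw [absMoment, integral_eq_comp_add_right_add_comp_sub_left 0 (hf s hs)]
  congr 1 <;> refine setIntegral_congr_fun measurableSet_Ioi fun t ht => ?_
  · simp only [add_zero, abs_of_pos (mem_Ioi.1 ht)]
  · simp only [zero_sub, abs_neg, abs_of_pos (mem_Ioi.1 ht)]

end AbsMoment

lemma exists_lt_of_integrable {f : ℝ → ℝ} (hf : Integrable f) {v : ℝ} (hv : 0 < v) (x : ℝ) :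
    ∃ y, x < y ∧ f y < v := by
  by_contra! h
  have hconst : IntegrableOn (fun _ => v) (Ioi x) := by
    refine hf.integrableOn.mono' aestronglyMeasurable_const ?_
    filter_upwards [ae_restrict_mem measurableSet_Ioi] with y hy
    rw [Real.norm_of_nonneg hv.le]
    exact h y hy
  simp [integrableOn_const_iff, hv.ne'] at hconst

/-- Log-concave functions on the real line, in the multiplicative form used by `IsLogConcave`. -/
structure IsLogConcaveFun (f : ℝ → ℝ) : Prop where
  nonneg : ∀ x, 0 ≤ f x
  rpow_mul_rpow_le : ∀ x y l : ℝ, 0 ≤ l → l ≤ 1 →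
    f x ^ l * f y ^ (1 - l) ≤ f (l * x + (1 - l) * y)

namespace IsLogConcaveFun

variable {f : ℝ → ℝ} {B c x y z : ℝ}

lemma comp_neg (hf : IsLogConcaveFun f) : IsLogConcaveFun fun x => f (-x) where
  nonneg x := hf.nonneg (-x)
  rpow_mul_rpow_le x y l h0 h1 := by
    convert hf.rpow_mul_rpow_le (-x) (-y) l h0 h1 using 2
    ring

lemma mul_exp_convexComb_lt (hf : IsLogConcaveFun f) (hB : 0 ≤ B) (hx0 : 0 < f x)
    (hx : B * Real.exp (c * x) ≤ f x) (hy : B * Real.exp (c * y) < f y) {l : ℝ} (hl0 : 0 ≤ l)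
    (hl1 : l < 1) :
    B * Real.exp (c * (l * x + (1 - l) * y)) < f (l * x + (1 - l) * y) := by
  have hl : 0 < 1 - l := sub_pos.2 hl1
  have hgeom : B * Real.exp (c * (l * x + (1 - l) * y)) =
      (B * Real.exp (c * x)) ^ l * (B * Real.exp (c * y)) ^ (1 - l) := by
    have hBl : B ^ l * B ^ (1 - l) = B := by
      rw [← Real.rpow_add' hB (by simp), add_sub_cancel, Real.rpow_one]
    rw [Real.mul_rpow hB (Real.exp_pos _).le, Real.mul_rpow hB (Real.exp_pos _).le,
      mul_mul_mul_comm, hBl, ← Real.exp_mul, ← Real.exp_mul, ← Real.exp_add]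
    ring_nf
  calc B * Real.exp (c * (l * x + (1 - l) * y))
      = (B * Real.exp (c * x)) ^ l * (B * Real.exp (c * y)) ^ (1 - l) := hgeom
    _ ≤ f x ^ l * (B * Real.exp (c * y)) ^ (1 - l) := by gcongr
    _ < f x ^ l * f y ^ (1 - l) :=
        mul_lt_mul_of_pos_left (Real.rpow_lt_rpow (by positivity) hy hl) (by positivity)
    _ ≤ f (l * x + (1 - l) * y) := hf.rpow_mul_rpow_le x y l hl0 hl1.le

lemma mul_exp_lt_of_mem_Ioc (hf : IsLogConcaveFun f) (hB : 0 ≤ B) (hx0 : 0 < f x)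
    (hx : B * Real.exp (c * x) ≤ f x) (hy : B * Real.exp (c * y) < f y) (hz : z ∈ Ioc x y) :
    B * Real.exp (c * z) < f z := by
  have hxy : 0 < y - x := by linarith [hz.1, hz.2]
  have h := hf.mul_exp_convexComb_lt hB hx0 hx hy (l := (y - z) / (y - x))
    (div_nonneg (sub_nonneg.2 hz.2) hxy.le) ((div_lt_one hxy).2 (by linarith [hz.1]))
  have hcomb : (y - z) / (y - x) * x + (1 - (y - z) / (y - x)) * y = z := by
    field_simp
    ring
  rwa [hcomb] at h

lemma ordConnected_mul_exp_lt (hf : IsLogConcaveFun f) (hB : 0 ≤ B) (c : ℝ) :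
    OrdConnected {x | B * Real.exp (c * x) < f x} := by
  refine ⟨fun x hx y hy z hz => ?_⟩
  rcases hz.1.eq_or_lt with rfl | hxz
  · exact hx
  · exact hf.mul_exp_lt_of_mem_Ioc hB ((by positivity : 0 ≤ B * Real.exp (c * x)).trans_lt hx)
      (le_of_lt hx) hy ⟨hxz, hz.2⟩

lemma measurable (hf : IsLogConcaveFun f) : Measurable f := by
  refine measurable_of_Ioi fun v => ?_
  rcases lt_or_ge v 0 with hv | hv
  · rw [eq_univ_of_forall fun x => show x ∈ f ⁻¹' Ioi v from hv.trans_le (hf.nonneg x)]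
    exact .univ
  · have h := hf.ordConnected_mul_exp_lt hv 0
    simp only [zero_mul, Real.exp_zero, mul_one] at h
    exact h.measurableSet

lemma exists_exp_tail_bound (hf : IsLogConcaveFun f) (hfi : Integrable f) :
    ∃ B c y, 0 < c ∧ ∀ z, y < z → f z ≤ B * Real.exp (-(c * z)) := by
  by_cases hzero : ∃ x, 0 < f x
  · obtain ⟨x, hx⟩ := hzero
    obtain ⟨y, hxy, hy⟩ := exists_lt_of_integrable hfi (half_pos hx) x
    have hd : 0 < y - x := sub_pos.2 hxy
    have hc : 0 < Real.log 2 / (y - x) := div_pos (Real.log_pos one_lt_two) hd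
    set c := Real.log 2 / (y - x) with hc_def
    have hval : ∀ z, f x * Real.exp (c * x) * Real.exp (-c * z) =
        f x * Real.exp (-(c * (z - x))) := fun z => by
      rw [mul_assoc, ← Real.exp_add]
      ring_nf
    refine ⟨f x * Real.exp (c * x), c, y, hc, fun z hz => ?_⟩
    rw [← neg_mul]
    by_contra! hlt
    have hleft : f x * Real.exp (c * x) * Real.exp (-c * x) ≤ f x := by
      rw [hval, sub_self, mul_zero, neg_zero, Real.exp_zero, mul_one]
    have hbetween := hf.mul_exp_lt_of_mem_Ioc (by positivity) hx hleft hlt ⟨hxy, hz.le⟩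
    rw [hval, hc_def, div_mul_cancel₀ _ hd.ne', Real.exp_neg, Real.exp_log two_pos] at hbetween
    linarith
  · push Not at hzero
    exact ⟨0, 1, 0, one_pos, fun z _ => by simpa using hzero z⟩

lemma hasRightMoments (hf : IsLogConcaveFun f) (hfi : Integrable f) : HasRightMoments f := by
  intro s hs
  obtain ⟨B, c, y, hc, htail⟩ := hf.exists_exp_tail_bound hfi
  have hbound := (hfi.integrableOn (s := Ioi 0)).const_mul (|y| ^ s) |>.add
    (((HasLaplace.abs_rpow hs).integrableOn c hc).norm.const_mul |B|)
  have hmeas : Measurable fun t => t ^ s * f t :=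
    (Real.continuous_rpow_const hs).measurable.mul hf.measurable
  refine hbound.mono' hmeas.aestronglyMeasurable ?_
  filter_upwards [ae_restrict_mem measurableSet_Ioi] with t ht
  have ht : 0 < t := ht
  have hft := hf.nonneg t
  rw [Real.norm_of_nonneg (by positivity), Pi.add_apply, norm_mul, Real.norm_of_nonneg
    (Real.exp_pos _).le, abs_of_pos ht, Real.norm_of_nonneg (by positivity)]
  rcases le_or_gt t y with hty | hty
  · have : t ^ s ≤ |y| ^ s := Real.rpow_le_rpow ht.le (hty.trans (le_abs_self y)) hs
    exact le_add_of_le_of_nonneg (by gcongr) (by positivity)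
  · refine le_add_of_nonneg_of_le (by positivity) ?_
    calc t ^ s * f t ≤ t ^ s * (|B| * Real.exp (-(c * t))) := by
          gcongr
          exact (htail t hty).trans (by gcongr; exact le_abs_self B)
      _ = |B| * (Real.exp (-(c * t)) * t ^ s) := by ring

lemma hasAbsMoments (hf : IsLogConcaveFun f) (hfi : Integrable f) : HasAbsMoments f :=
  (hf.hasRightMoments hfi).hasAbsMoments (hf.comp_neg.hasRightMoments hfi.comp_neg)

end IsLogConcaveFun

/-- The `s`-th absolute moment of a two-sided exponential distribution: with probability `w` the
variable is `m + w σ E`, and with probability `1 - w` it is `m - (1 - w) σ E`, where `E` is standard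
exponential. With these scales the density takes the value `1 / σ` on both sides of `m`. -/
noncomputable def twoSidedMoment (s m σ w : ℝ) : ℝ :=
  w * expMoment s m (w * σ) + (1 - w) * expMoment s (-m) ((1 - w) * σ)

/-- The parameters of a two-sided exponential distribution other than the point mass at `0`;
`σ = 0` encodes the point mass at `m`. -/
structure IsTwoSidedParam (m σ w : ℝ) : Prop where
  scale_nonneg : 0 ≤ σ
  weight_nonneg : 0 ≤ w
  weight_le_one : w ≤ 1
  center_or_scale_ne_zero : m ≠ 0 ∨ σ ≠ 0

section TwoSidedMoment

variable {s m σ w : ℝ}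

lemma continuous_twoSidedMoment (hs : 0 ≤ s) :
    Continuous fun z : ℝ × ℝ × ℝ => twoSidedMoment s z.1 z.2.1 z.2.2 := by
  have h (g₁ g₂ : ℝ × ℝ × ℝ → ℝ) (hg₁ : Continuous g₁) (hg₂ : Continuous g₂) :
      Continuous fun z => expMoment s (g₁ z) (g₂ z) :=
    (continuous_expMoment hs).comp (hg₁.prodMk hg₂)
  unfold twoSidedMoment
  refine .add (.mul (by fun_prop) (h _ _ ?_ ?_)) (.mul (by fun_prop) (h _ _ ?_ ?_)) <;> fun_prop

lemma twoSidedMoment_mul {c : ℝ} (hc : 0 ≤ c) (s m σ w : ℝ) :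
    twoSidedMoment s (c * m) (c * σ) w = c ^ s * twoSidedMoment s m σ w := by
  simp only [twoSidedMoment, mul_left_comm _ c, ← mul_neg, expMoment_mul hc]
  ring

lemma twoSidedMoment_reflect (s m σ w : ℝ) :
    twoSidedMoment s (-m) σ (1 - w) = twoSidedMoment s m σ w := by
  simp only [twoSidedMoment, sub_sub_cancel, neg_neg, add_comm]

lemma twoSidedMoment_zero (m σ w : ℝ) : twoSidedMoment 0 m σ w = 1 := by
  simp only [twoSidedMoment, expMoment_zero_left, mul_one, add_sub_cancel]

lemma twoSidedMoment_zero_scale (s m w : ℝ) : twoSidedMoment s m 0 w = |m| ^ s := by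
  simp only [twoSidedMoment, mul_zero, expMoment_zero_right, abs_neg]
  ring

lemma twoSidedMoment_one (s m σ : ℝ) : twoSidedMoment s m σ 1 = expMoment s m σ := by
  simp only [twoSidedMoment, one_mul, sub_self, zero_mul, add_zero]

lemma twoSidedMoment_pos (hs : 0 < s) (h : IsTwoSidedParam m σ w) :
    0 < twoSidedMoment s m σ w := by
  have h1w := sub_nonneg.2 h.weight_le_one
  rcases h.weight_nonneg.eq_or_lt with rfl | hw
  · have := expMoment_pos hs (h.center_or_scale_ne_zero.imp_left neg_ne_zero.2)
    simpa [twoSidedMoment] using this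
  · have := expMoment_pos hs (h.center_or_scale_ne_zero.imp_right (mul_ne_zero hw.ne'))
    exact add_pos_of_pos_of_nonneg (by positivity) (mul_nonneg h1w (expMoment_nonneg _ _ _))

end TwoSidedMoment

/-- The density of the two-sided exponential distribution of `twoSidedMoment`. -/
noncomputable def twoSidedExp (m σ w x : ℝ) : ℝ :=
  if m < x then expDensity w (w * σ) (x - m) else expDensity (1 - w) ((1 - w) * σ) (m - x)

section TwoSidedExp

variable {m σ w x : ℝ}

lemma twoSidedExp_of_lt (h : m < x) : twoSidedExp m σ w x = expDensity w (w * σ) (x - m) := if_pos h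

lemma twoSidedExp_of_le (h : x ≤ m) :
    twoSidedExp m σ w x = expDensity (1 - w) ((1 - w) * σ) (m - x) := if_neg h.not_gt

lemma twoSidedExp_nonneg (hσ : 0 ≤ σ) (hw0 : 0 ≤ w) (hw1 : w ≤ 1) (x : ℝ) :
    0 ≤ twoSidedExp m σ w x := by
  have h1w := sub_nonneg.2 hw1
  rcases lt_or_ge m x with h | h
  · exact twoSidedExp_of_lt h ▸ expDensity_nonneg hw0 (by positivity) _
  · exact twoSidedExp_of_le h ▸ expDensity_nonneg h1w (by positivity) _

lemma abs_rpow_mul_twoSidedExp_add (s : ℝ) {y : ℝ} (hy : 0 < y) :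
    |y + m| ^ s * twoSidedExp m σ w (y + m) = |y + m| ^ s * expDensity w (w * σ) y := by
  rw [twoSidedExp_of_lt (lt_add_of_pos_left m hy), add_sub_cancel_right]

lemma abs_rpow_mul_twoSidedExp_sub (s : ℝ) {y : ℝ} (hy : 0 < y) :
    |m - y| ^ s * twoSidedExp m σ w (m - y) =
      |y + -m| ^ s * expDensity (1 - w) ((1 - w) * σ) y := by
  rw [twoSidedExp_of_le (sub_le_self m hy.le), sub_sub_cancel, abs_sub_comm, sub_eq_add_neg y]

lemma hasAbsMoments_twoSidedExp (hσ : 0 ≤ σ) (hw0 : 0 ≤ w) (hw1 : w ≤ 1) :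
    HasAbsMoments (twoSidedExp m σ w) := fun s hs => by
  have h1w := sub_nonneg.2 hw1
  refine (integrable_iff_comp_add_right_and_comp_sub_left _ m).2 ⟨?_, ?_⟩
  · exact (integrableOn_abs_rpow_mul_expDensity hs (mul_nonneg hw0 hσ) w m).congr_fun
      (fun y hy => (abs_rpow_mul_twoSidedExp_add s hy).symm) measurableSet_Ioi
  · exact (integrableOn_abs_rpow_mul_expDensity hs (mul_nonneg h1w hσ) (1 - w) (-m)).congr_fun
      (fun y hy => (abs_rpow_mul_twoSidedExp_sub s hy).symm) measurableSet_Ioi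

lemma absMoment_twoSidedExp {s : ℝ} (hs : 0 ≤ s) (hσ : 0 < σ) (hw0 : 0 ≤ w) (hw1 : w ≤ 1) :
    absMoment s (twoSidedExp m σ w) = twoSidedMoment s m σ w := by
  have h1w := sub_nonneg.2 hw1
  have hright := integral_abs_rpow_mul_expDensity (mul_nonneg hw0 hσ.le)
    (eq_zero_of_ne_zero_of_mul_right_eq_zero hσ.ne') s m
  have hleft := integral_abs_rpow_mul_expDensity (mul_nonneg h1w hσ.le)
    (eq_zero_of_ne_zero_of_mul_right_eq_zero hσ.ne') s (-m)
  rw [absMoment, integral_eq_comp_add_right_add_comp_sub_left m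
    (hasAbsMoments_twoSidedExp hσ.le hw0 hw1 s hs), twoSidedMoment, ← hright, ← hleft]
  congr 1
  · exact setIntegral_congr_fun measurableSet_Ioi fun y hy => abs_rpow_mul_twoSidedExp_add s hy
  · exact setIntegral_congr_fun measurableSet_Ioi fun y hy => abs_rpow_mul_twoSidedExp_sub s hy

end TwoSidedExp

/-- The centre of the two-sided exponential density of right weight `w` which agrees with
`expDensity M b (-x)` for `x` to the left of the centre; its scale is `b / (1 - w)`. -/
noncomputable def extensionCenter (M b w : ℝ) : ℝ := b * Real.log ((1 - w) / M)

section Extension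

variable {M b w s : ℝ}

lemma extensionCenter_nonneg (hM : 0 < M) (hb : 0 ≤ b) (hw : w ≤ 1 - M) :
    0 ≤ extensionCenter M b w :=
  mul_nonneg hb (Real.log_nonneg ((one_le_div hM).2 (by linarith)))

lemma twoSidedExp_extension_of_le (hM : 0 < M) (hb : 0 < b) (hw : w ≤ 1 - M) {x : ℝ}
    (hx : x ≤ extensionCenter M b w) :
    twoSidedExp (extensionCenter M b w) (b / (1 - w)) w x = expDensity M b (-x) := by
  have h1w : 0 < 1 - w := by linarith
  have hexp : Real.exp (-(extensionCenter M b w) / b) = M / (1 - w) := by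
    rw [extensionCenter, neg_div, mul_div_cancel_left₀ _ hb.ne', Real.exp_neg,
      Real.exp_log (div_pos h1w hM), inv_div]
  have hsub : extensionCenter M b w - x = -x - -extensionCenter M b w := by ring
  rw [twoSidedExp_of_le hx, mul_div_cancel₀ b h1w.ne', hsub, expDensity_sub, hexp,
    mul_div_cancel₀ M h1w.ne']

lemma rightMoment_extension_add (hM : 0 < M) (hb : 0 < b) (hw0 : 0 ≤ w) (hw : w ≤ 1 - M)
    (hs : 0 ≤ s) :
    rightMoment s (twoSidedExp (extensionCenter M b w) (b / (1 - w)) w) + M * expMoment s 0 b =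
      twoSidedMoment s (extensionCenter M b w) (b / (1 - w)) w := by
  have h1w : 0 < 1 - w := by linarith
  have hσ : 0 < b / (1 - w) := by positivity
  have hw1 : w ≤ 1 := by linarith
  rw [← absMoment_twoSidedExp hs hσ hw0 hw1,
    (hasAbsMoments_twoSidedExp hσ.le hw0 hw1).absMoment_eq_add hs,
    ← rightMoment_expDensity hb.le (absurd · hb.ne')]
  congr 1
  refine setIntegral_congr_fun measurableSet_Ioi fun t ht => ?_
  have hle : -t ≤ extensionCenter M b w :=
    (neg_nonpos.2 (mem_Ioi.1 ht).le).trans (extensionCenter_nonneg hM hb.le hw)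
  simp only [twoSidedExp_extension_of_le hM hb hw hle, neg_neg]

lemma continuousOn_twoSidedMoment_extension (hM : 0 < M) (hs : 0 ≤ s) (b : ℝ) :
    ContinuousOn (fun w => twoSidedMoment s (extensionCenter M b w) (b / (1 - w)) w)
      (Icc 0 (1 - M)) := by
  have hne : ∀ w ∈ Icc (0 : ℝ) (1 - M), 1 - w ≠ 0 := fun w hw => by linarith [hw.2]
  refine (continuous_twoSidedMoment hs).comp_continuousOn (.prodMk ?_ (.prodMk ?_ continuousOn_id))
  · exact continuousOn_const.mul
      (ContinuousOn.log (by fun_prop) fun w hw => div_ne_zero (hne w hw) hM.ne')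
  · exact continuousOn_const.div (by fun_prop) hne

end Extension

lemma exists_mem_Ioo_of_ae_restrict_Ioi {P : ℝ → Prop} {a b c : ℝ}
    (h : ∀ᵐ t ∂volume.restrict (Ioi c), P t) (hca : c ≤ a) (hab : a < b) : ∃ t ∈ Ioo a b, P t := by
  have hsub : ∀ᵐ t ∂volume.restrict (Ioo a b), P t :=
    ae_mono (Measure.restrict_mono (fun t ht => hca.trans_lt ht.1) le_rfl) h
  have : (ae (volume.restrict (Ioo a b))).NeBot := by
    refine ae_neBot.2 fun h0 => hab.not_ge ?_
    rwa [Measure.restrict_eq_zero, Real.volume_Ioo, ENNReal.ofReal_eq_zero, sub_nonpos] at h0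
  obtain ⟨t, hPt, ht⟩ := (hsub.and (ae_restrict_mem measurableSet_Ioo)).exists
  exact ⟨t, ht, hPt⟩

namespace IsLogConcaveFun

variable {f : ℝ → ℝ} {M b p q : ℝ}

lemma ordConnected_expDensity_lt (hf : IsLogConcaveFun f) (hM : 0 ≤ M) (hb : 0 ≤ b) (m : ℝ) :
    OrdConnected {t | expDensity M b (t - m) < f t} := by
  simp only [expDensity_sub]
  simp only [expDensity_eq_mul_exp]
  exact hf.ordConnected_mul_exp_lt (by positivity) _

lemma rightMoment_le_expMoment (hf : IsLogConcaveFun f) (hfi : Integrable f) (hq : 0 < q)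
    (hpq : q < p) (hM : 0 ≤ M) (hb : 0 < b) (h0 : rightMoment 0 f = M)
    (hmatch : rightMoment q f = M * expMoment q 0 b) : rightMoment p f ≤ M * expMoment p 0 b := by
  have hexp := rightMoment_expDensity (M := M) hb.le (absurd · hb.ne')
  have hord := hf.ordConnected_expDensity_lt hM hb.le 0
  simp only [sub_zero] at hord
  rw [← hexp p]
  refine rightMoment_le (hf.hasRightMoments hfi) (hasRightMoments_expDensity hb.le M) hq hpq ?_ ?_
    (ordConnected_Ioi.inter hord)
  · rw [hexp, expMoment_zero_left, mul_one, h0]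
  · rw [hexp, hmatch]

lemma le_expDensity_neg (hf : IsLogConcaveFun f) (hfi : Integrable f) (hq : 0 < q) (hM : 0 < M)
    (hb : 0 < b) (h0 : rightMoment 0 (fun x => f (-x)) = M)
    (hmatch : rightMoment q (fun x => f (-x)) = M * expMoment q 0 b) {x : ℝ} (hx : 0 ≤ x) :
    f x ≤ expDensity M b (-x) := by
  by_contra! hcon
  have hexp := rightMoment_expDensity (M := M) hb.le (absurd · hb.ne')
  have hbetween : ∀ s t, s < t → t ≤ x → M / b * Real.exp (b⁻¹ * s) ≤ f s →
      M / b * Real.exp (b⁻¹ * t) < f t := fun s t hst htx hs =>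
    hf.mul_exp_lt_of_mem_Ioc (y := x) (by positivity) (lt_of_lt_of_le (by positivity) hs) hs
      (by simpa [expDensity_eq_mul_exp] using hcon) ⟨hst, htx⟩
  have hae := ae_eq_of_rightMoment_eq (hf.comp_neg.hasRightMoments hfi.comp_neg)
    (hasRightMoments_expDensity hb.le M) hq
    (by rw [hexp, expMoment_zero_left, mul_one, h0]) (by rw [hexp, hmatch])
    (fun s t hs hst hlt => by
      have := hbetween (-t) (-s) (neg_lt_neg hst) (by linarith)
        (by simpa [expDensity_eq_mul_exp] using hlt.le)
      simpa [expDensity_eq_mul_exp] using this)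
  obtain ⟨s, hs, hfs⟩ := exists_mem_Ioo_of_ae_restrict_Ioi hae zero_le_one one_lt_two
  obtain ⟨t, ht, hft⟩ := exists_mem_Ioo_of_ae_restrict_Ioi hae le_rfl zero_lt_one
  have := hbetween (-s) (-t) (by linarith [hs.1, ht.2]) (by linarith [ht.1])
    (by simp [hfs, expDensity_eq_mul_exp])
  simp [hft, expDensity_eq_mul_exp] at this

end IsLogConcaveFun

section ExtensionWeight

variable {f : ℝ → ℝ} {M b p q w : ℝ}

lemma hasRightMoments_extension (hM : 0 < M) (hb : 0 < b) (hw0 : 0 ≤ w) (hw : w ≤ 1 - M) :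
    HasRightMoments (twoSidedExp (extensionCenter M b w) (b / (1 - w)) w) :=
  (hasAbsMoments_twoSidedExp (div_nonneg hb.le (by linarith)) hw0 (by linarith)).hasRightMoments

lemma rightMoment_zero_extension (hM : 0 < M) (hb : 0 < b) (hw0 : 0 ≤ w) (hw : w ≤ 1 - M) :
    rightMoment 0 (twoSidedExp (extensionCenter M b w) (b / (1 - w)) w) = 1 - M := by
  have := rightMoment_extension_add hM hb hw0 hw le_rfl
  rw [expMoment_zero_left, twoSidedMoment_zero] at this
  linarith

lemma rightMoment_extension_zero_le (hf0 : ∀ x, 0 ≤ f x) (hf : HasRightMoments f) (hq : 0 ≤ q)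
    (hM : 0 < M) (hM1 : M ≤ 1) (hb : 0 < b) (hmass : rightMoment 0 f = 1 - M)
    (hle : ∀ x, 0 ≤ x → f x ≤ expDensity M b (-x)) :
    rightMoment q (twoSidedExp (extensionCenter M b 0) (b / (1 - 0)) 0) ≤ rightMoment q f := by
  have hw : (0 : ℝ) ≤ 1 - M := sub_nonneg.2 hM1
  refine rightMoment_le_of_crossing hf (hasRightMoments_extension hM hb le_rfl hw) hq
    (extensionCenter_nonneg hM hb.le hw)
    (hmass.trans (rightMoment_zero_extension hM hb le_rfl hw).symm) (fun t ht htm => ?_)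
    fun t hmt => ?_
  · rw [twoSidedExp_extension_of_le hM hb hw htm]
    exact hle t ht.le
  · rw [twoSidedExp_of_lt hmt, expDensity, zero_div, zero_mul]
    exact hf0 t

lemma le_twoSidedMoment_extension_one_sub {g : ℝ} (hq : 0 < q) (hM : 0 < M) (hM1 : M ≤ 1)
    (hg : 0 ≤ g) (hgb : g * M ≤ (1 - M) * b) :
    (1 - M) * expMoment q 0 g + M * expMoment q 0 b ≤
      twoSidedMoment q (extensionCenter M b (1 - M)) (b / (1 - (1 - M))) (1 - M) := by
  have hgle : g ≤ (1 - M) * (b / M) := by rwa [← mul_div_assoc, le_div_iff₀ hM]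
  have hN := sub_nonneg.2 hM1
  have hmono : expMoment q 0 g ≤ expMoment q 0 ((1 - M) * (b / M)) := by
    rw [expMoment_center hq hg, expMoment_center hq (hg.trans hgle)]
    have := (Real.Gamma_pos_of_pos (by linarith : 0 < q + 1)).le
    gcongr
  rw [extensionCenter, sub_sub_cancel, div_self hM.ne', Real.log_one, mul_zero, twoSidedMoment,
    neg_zero, sub_sub_cancel, mul_div_cancel₀ b hM.ne']
  gcongr

lemma exists_weight_twoSidedMoment_eq {g : ℝ} (hf0 : ∀ x, 0 ≤ f x) (hf : HasRightMoments f)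
    (hq : 0 < q) (hM : 0 < M) (hM1 : M ≤ 1) (hb : 0 < b) (hg : 0 ≤ g)
    (hmass : rightMoment 0 f = 1 - M) (hmoment : rightMoment q f = (1 - M) * expMoment q 0 g)
    (hgb : g * M ≤ (1 - M) * b) (hle : ∀ x, 0 ≤ x → f x ≤ expDensity M b (-x)) :
    ∃ w ∈ Icc 0 (1 - M), twoSidedMoment q (extensionCenter M b w) (b / (1 - w)) w =
      rightMoment q f + M * expMoment q 0 b := by
  have hN := sub_nonneg.2 hM1
  refine intermediate_value_Icc hN (continuousOn_twoSidedMoment_extension hM hq.le b) ⟨?_, ?_⟩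
  · rw [← rightMoment_extension_add hM hb le_rfl hN hq.le]
    gcongr
    exact rightMoment_extension_zero_le hf0 hf hq.le hM hM1 hb hmass hle
  · rw [hmoment]
    exact le_twoSidedMoment_extension_one_sub hq hM hM1 hg hgb

lemma IsLogConcaveFun.rightMoment_le_extension (hf : IsLogConcaveFun f) (hfi : Integrable f)
    (hq : 0 < q) (hpq : q < p) (hM : 0 < M) (hb : 0 < b) (hw0 : 0 ≤ w) (hw : w ≤ 1 - M)
    (hmass : rightMoment 0 f = 1 - M)
    (hmoment : rightMoment q f =
      rightMoment q (twoSidedExp (extensionCenter M b w) (b / (1 - w)) w))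
    (hle : ∀ x, 0 ≤ x → f x ≤ expDensity M b (-x)) :
    rightMoment p f ≤ rightMoment p (twoSidedExp (extensionCenter M b w) (b / (1 - w)) w) := by
  refine rightMoment_le (hf.hasRightMoments hfi) (hasRightMoments_extension hM hb hw0 hw) hq hpq
    (hmass.trans (rightMoment_zero_extension hM hb hw0 hw).symm) hmoment ?_
  set m := extensionCenter M b w
  have hset : {t | 0 < t ∧ twoSidedExp m (b / (1 - w)) w t < f t} =
      Ioi m ∩ {t | expDensity w (w * (b / (1 - w))) (t - m) < f t} := by
    ext t
    constructor
    · rintro ⟨ht, hlt⟩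
      have hmt : m < t := by
        by_contra! htm
        rw [twoSidedExp_extension_of_le hM hb hw htm] at hlt
        exact (hle t ht.le).not_gt hlt
      exact ⟨hmt, by rwa [mem_ofPred_eq, ← twoSidedExp_of_lt hmt]⟩
    · rintro ⟨hmt, hlt⟩
      exact ⟨(extensionCenter_nonneg hM hb.le hw).trans_lt hmt, by rwa [twoSidedExp_of_lt hmt]⟩
  rw [hset]
  exact ordConnected_Ioi.inter (hf.ordConnected_expDensity_lt hw0
    (mul_nonneg hw0 (div_nonneg hb.le (by linarith))) m)

end ExtensionWeight

/-- Some two-sided exponential distribution has the same `q`-th absolute moment as the density `f`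
and at least as large a `p`-th absolute moment. -/
def IsTwoSidedDominated (p q : ℝ) (f : ℝ → ℝ) : Prop :=
  ∃ m σ w, IsTwoSidedParam m σ w ∧ absMoment q f = twoSidedMoment q m σ w ∧
    absMoment p f ≤ twoSidedMoment p m σ w

lemma IsTwoSidedDominated.of_comp_neg {p q : ℝ} {f : ℝ → ℝ}
    (h : IsTwoSidedDominated p q fun x => f (-x)) : IsTwoSidedDominated p q f := by
  simpa only [IsTwoSidedDominated, absMoment_comp_neg] using h

namespace IsLogConcaveFun

variable {f : ℝ → ℝ} {p q : ℝ}

lemma exists_rightMoment_eq_mul_expMoment (hf : IsLogConcaveFun f) (hfi : Integrable f)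
    (hq : 0 < q) (hpos : 0 < rightMoment 0 f) :
    ∃ b, 0 < b ∧ rightMoment q f = rightMoment 0 f * expMoment q 0 b := by
  have hmom := hf.hasRightMoments hfi
  have hq0 : rightMoment q f ≠ 0 := fun h => hpos.ne' <|
    (rightMoment_eq_zero_iff hf.nonneg hmom le_rfl).2
      ((rightMoment_eq_zero_iff hf.nonneg hmom hq.le).1 h)
  obtain ⟨b, hb, h⟩ := exists_mul_expMoment_eq hq hpos
    ((rightMoment_nonneg hf.nonneg q).lt_of_ne' hq0)
  exact ⟨b, hb, h.symm⟩

lemma isTwoSidedDominated_of_rightMoment_neg_eq_zero (hf : IsLogConcaveFun f)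
    (hfi : Integrable f) (hf1 : ∫ x, f x = 1) (hq : 0 < q) (hpq : q < p)
    (hneg : rightMoment 0 (fun x => f (-x)) = 0) : IsTwoSidedDominated p q f := by
  have habs := hf.hasAbsMoments hfi
  have hmom := hf.comp_neg.hasRightMoments hfi.comp_neg
  have hzero := (rightMoment_eq_zero_iff hf.comp_neg.nonneg hmom le_rfl).1 hneg
  have hnegs : ∀ s, 0 ≤ s → rightMoment s (fun x => f (-x)) = 0 := fun s hs =>
    (rightMoment_eq_zero_iff hf.comp_neg.nonneg hmom hs).2 hzero
  have hright : ∀ s, 0 ≤ s → absMoment s f = rightMoment s f := fun s hs => by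
    rw [habs.absMoment_eq_add hs, hnegs s hs, add_zero]
  have hmass : rightMoment 0 f = 1 := by rw [← hright 0 le_rfl, absMoment_zero, hf1]
  obtain ⟨b, hb, hmatch⟩ := hf.exists_rightMoment_eq_mul_expMoment hfi hq (hmass ▸ one_pos)
  have hle := hf.rightMoment_le_expMoment hfi hq hpq (hmass ▸ zero_le_one) hb rfl hmatch
  rw [hmass, one_mul] at hmatch hle
  refine ⟨0, b, 1, ⟨hb.le, zero_le_one, le_rfl, .inr hb.ne'⟩, ?_, ?_⟩
  · rw [hright q hq.le, hmatch, twoSidedMoment_one]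
  · rwa [hright p (hq.trans hpq).le, twoSidedMoment_one]

lemma isTwoSidedDominated_of_scale_mul_le (hf : IsLogConcaveFun f) (hfi : Integrable f)
    (hf1 : ∫ x, f x = 1) (hq : 0 < q) (hpq : q < p) {M b g : ℝ} (hM : 0 < M) (hb : 0 < b)
    (hg : 0 ≤ g) (hneg0 : rightMoment 0 (fun x => f (-x)) = M)
    (hnegq : rightMoment q (fun x => f (-x)) = M * expMoment q 0 b)
    (hposq : rightMoment q f = rightMoment 0 f * expMoment q 0 g)
    (hgb : g * M ≤ rightMoment 0 f * b) : IsTwoSidedDominated p q f := by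
  have hp := hq.trans hpq
  have habs := hf.hasAbsMoments hfi
  have hpos0 : rightMoment 0 f = 1 - M := by
    rw [← hf1, ← absMoment_zero, habs.absMoment_eq_add le_rfl, hneg0, add_sub_cancel_right]
  have hM1 : M ≤ 1 := sub_nonneg.1 (hpos0 ▸ rightMoment_nonneg hf.nonneg 0)
  have hle : ∀ x, 0 ≤ x → f x ≤ expDensity M b (-x) := fun x =>
    hf.le_expDensity_neg hfi hq hM hb hneg0 hnegq
  rw [hpos0] at hposq hgb
  obtain ⟨w, ⟨hw0, hw⟩, hwq⟩ := exists_weight_twoSidedMoment_eq hf.nonneg habs.hasRightMoments hq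
    hM hM1 hb hg hpos0 hposq hgb hle
  have hσ : 0 < b / (1 - w) := div_pos hb (by linarith)
  refine ⟨extensionCenter M b w, b / (1 - w), w, ⟨hσ.le, hw0, by linarith, .inr hσ.ne'⟩, ?_, ?_⟩
  · rw [habs.absMoment_eq_add hq.le, hnegq, hwq]
  · rw [habs.absMoment_eq_add hp.le, ← rightMoment_extension_add hM hb hw0 hw hp.le]
    rw [← rightMoment_extension_add hM hb hw0 hw hq.le] at hwq
    exact add_le_add
      (hf.rightMoment_le_extension hfi hq hpq hM hb hw0 hw hpos0 (add_right_cancel hwq).symm hle)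
      (hf.comp_neg.rightMoment_le_expMoment hfi.comp_neg hq hpq hM.le hb hneg0 hnegq)

lemma isTwoSidedDominated (hf : IsLogConcaveFun f) (hfi : Integrable f) (hf1 : ∫ x, f x = 1)
    (hq : 0 < q) (hpq : q < p) : IsTwoSidedDominated p q f := by
  have hfn1 : ∫ x, f (-x) = 1 := by rw [integral_neg_eq_self, hf1]
  rcases (rightMoment_nonneg hf.comp_neg.nonneg 0).eq_or_lt with hL | hL
  · exact hf.isTwoSidedDominated_of_rightMoment_neg_eq_zero hfi hf1 hq hpq hL.symm
  rcases (rightMoment_nonneg hf.nonneg 0).eq_or_lt with hR | hR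
  · exact .of_comp_neg <| hf.comp_neg.isTwoSidedDominated_of_rightMoment_neg_eq_zero hfi.comp_neg
      hfn1 hq hpq (by simpa only [neg_neg] using hR.symm)
  obtain ⟨b, hb, hbq⟩ := hf.comp_neg.exists_rightMoment_eq_mul_expMoment hfi.comp_neg hq hL
  obtain ⟨g, hg, hgq⟩ := hf.exists_rightMoment_eq_mul_expMoment hfi hq hR
  rcases le_total (g * rightMoment 0 fun x => f (-x)) (rightMoment 0 f * b) with hgb | hbg
  · exact hf.isTwoSidedDominated_of_scale_mul_le hfi hf1 hq hpq hL hb hg.le rfl hbq hgq hgb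
  · exact .of_comp_neg <| hf.comp_neg.isTwoSidedDominated_of_scale_mul_le hfi.comp_neg hfn1 hq hpq
      hR hg hb.le (by simp only [neg_neg]) (by simpa only [neg_neg] using hgq) hbq (by linarith)

end IsLogConcaveFun

lemma exp_mul_neg_iff {x c : ℝ} : Real.exp x * c < 0 ↔ c < 0 :=
  smul_neg_iff_of_pos_left (Real.exp_pos x)

lemma strictConvexOn_exp_mul {c : ℝ} (hc : c ≠ 0) :
    StrictConvexOn ℝ univ fun y => Real.exp (c * y) := by
  refine ⟨convex_univ, fun x _ y _ hxy a b ha hb hab => ?_⟩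
  have := strictConvexOn_exp.2 (mem_univ (c * x)) (mem_univ (c * y))
    ((mul_right_injective₀ hc).ne hxy) ha hb hab
  simpa only [smul_eq_mul, mul_add, mul_left_comm c] using this

/-- Even functions with a convergent Laplace transform which, on `[0, ∞)`, are negative strictly
between any two points where they are nonpositive. -/
structure IsSingleWell (h : ℝ → ℝ) : Prop extends HasLaplace h where
  even : ∀ x, h (-x) = h x
  neg_of_lt_of_lt : ∀ ⦃x y z⦄, 0 ≤ x → x < y → y < z → h x ≤ 0 → h z ≤ 0 → h y < 0

namespace IsSingleWell

variable {h : ℝ → ℝ} {m l r : ℝ}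

lemma comp_abs (hh : IsSingleWell h) (x : ℝ) : h |x| = h x := by
  rcases abs_choice x with hx | hx
  exacts [by rw [hx], by rw [hx, hh.even]]

lemma not_ae_eq_zero (hh : IsSingleWell h) (hm : 0 ≤ m) (l : ℝ) :
    ¬(fun y => Real.exp (-(l * y)) * h (y + m)) =ᵐ[volume.restrict (Ioi 0)] 0 := fun hae => by
  have hroot {c : ℝ} (hc : 0 ≤ c) : ∃ t ∈ Ioo c (c + 1), h (t + m) = 0 := by
    obtain ⟨t, ht, h0⟩ := exists_mem_Ioo_of_ae_restrict_Ioi hae hc (lt_add_one c)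
    exact ⟨t, ht, (mul_eq_zero.1 h0).resolve_left (Real.exp_ne_zero _)⟩
  obtain ⟨x, hx, hx0⟩ := hroot (c := 0) le_rfl
  obtain ⟨y, hy, hy0⟩ := hroot (c := 1) zero_le_one
  obtain ⟨z, hz, hz0⟩ := hroot (c := 2) zero_le_two
  refine (hh.neg_of_lt_of_lt (add_nonneg hx.1.le hm) ?_ ?_ hx0.le hz0.le).ne hy0
  · linarith [hx.2, hy.1]
  · linarith [hy.2, hz.1]

lemma ordConnected_exp_mul_neg (hh : IsSingleWell h) (hm : 0 ≤ m) (l : ℝ) :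
    OrdConnected {y | 0 < y ∧ Real.exp (-(l * y)) * h (y + m) < 0} := by
  simp only [exp_mul_neg_iff]
  refine ⟨fun x hx z hz y hy => ⟨hx.1.trans_le hy.1, ?_⟩⟩
  rcases hy.1.eq_or_lt with rfl | hxy
  · exact hx.2
  rcases hy.2.eq_or_lt with rfl | hyz
  · exact hz.2
  exact hh.neg_of_lt_of_lt (add_nonneg hx.1.le hm) (add_lt_add_left hxy m) (add_lt_add_left hyz m)
    hx.2.le hz.2.le

section Centered

variable (hh : IsSingleWell h) (hm : 0 ≤ m) (hl : 0 < l)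
  (h0 : laplace (fun y => h (y + m)) l = 0) (h1 : laplace (fun y => y * h (y + m)) l = 0)

include hh hm hl h0 h1

lemma laplace_pos (hr : 0 < r) (hlr : l ≠ r) : 0 < laplace (fun y => h (y + m)) r := by
  have hexp (y : ℝ) : Real.exp ((l - r) * y) * (Real.exp (-(l * y)) * h (y + m)) =
      Real.exp (-(r * y)) * h (y + m) := by
    rw [← mul_assoc, ← Real.exp_add]
    ring_nf
  have hshift := hh.toHasLaplace.comp_add_right m
  have hid := hshift.id_mul.integrableOn l hl
  have hpos := ae_eq_zero_or_integral_comp_mul_pos (strictConvexOn_exp_mul (sub_ne_zero.2 hlr))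
    (strictMono_id.strictMonoOn _) (mapsTo_univ _ _) (hshift.integrableOn l hl)
    (by simpa only [id, mul_left_comm] using hid)
    (by simpa only [id, hexp] using hshift.integrableOn r hr) h0
    (by simpa only [id, mul_left_comm, laplace] using h1) (hh.ordConnected_exp_mul_neg hm l)
  simpa only [id, hexp, laplace] using hpos.resolve_left (hh.not_ae_eq_zero hm l)

omit hm in
lemma pos_of_mem_Icc {t : ℝ} (ht : t ∈ Icc 0 m) : 0 < h t := by
  by_contra! hneg
  have hshift := hh.toHasLaplace.comp_add_right m
  have hid := hshift.id_mul.integrableOn l hl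
  refine hh.not_ae_eq_zero (ht.1.trans ht.2) l (ae_eq_zero_of_neg_downward_closed
    (strictMono_id.strictMonoOn _) (hshift.integrableOn l hl)
    (by simpa only [id, mul_left_comm] using hid) h0
    (by simpa only [id, mul_left_comm, laplace] using h1) fun x y hx hxy hy => ?_)
  rw [exp_mul_neg_iff] at hy ⊢
  exact hh.neg_of_lt_of_lt ht.1 (by linarith [ht.2]) (add_lt_add_left hxy m) hneg hy.le

lemma center_eq_zero_and_rate_eq (hr : 0 < r) (h2 : laplace (fun y => h (y + -m)) r = 0) :
    m = 0 ∧ l = r := by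
  have hnonneg : 0 ≤ laplace (fun y => h (y + m)) r := by
    rcases eq_or_ne l r with rfl | hlr
    exacts [h0.ge, (laplace_pos hh hm hl h0 h1 hr hlr).le]
  have hm0 : m = 0 := by
    by_contra hne
    have hsplit := (hh.toHasLaplace.comp_add_right (-m)).laplace_eq_integral_add hr (2 * m)
    simp only [h2, add_assoc, show 2 * m + -m = m by ring] at hsplit
    refine hsplit.not_lt (add_pos_of_pos_of_nonneg ?_ (mul_nonneg (Real.exp_pos _).le hnonneg))
    refine intervalIntegral.intervalIntegral_pos_of_pos_on
      (((hh.toHasLaplace.comp_add_right (-m)).continuous_exp_mul r).intervalIntegrable _ _)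
      (fun y hy => mul_pos (Real.exp_pos _) ?_) (by positivity)
    exact hh.comp_abs (y + -m) ▸ pos_of_mem_Icc hh hl h0 h1
      ⟨abs_nonneg _, abs_le.2 ⟨by linarith [hy.1], by linarith [hy.2]⟩⟩
  refine ⟨hm0, by_contra fun hlr => ?_⟩
  have := laplace_pos hh hm hl h0 h1 hr hlr
  simp only [hm0, neg_zero] at h2 this
  exact this.ne' h2

end Centered

end IsSingleWell

lemma isSingleWell_rpow_add_rpow_add_const {p q A : ℝ} (hq : 0 < q) (hpq : q < p) (hA : 0 < A)
    (B C : ℝ) : IsSingleWell fun x => A * |x| ^ p + B * |x| ^ q + C where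
  toHasLaplace := ((((HasLaplace.abs_rpow (hq.trans hpq).le).const_mul A).add
    ((HasLaplace.abs_rpow hq.le).const_mul B)).add (.const C))
  even x := by simp only [abs_neg]
  neg_of_lt_of_lt x y z hx hxy hyz hhx hhz := by
    have hy : 0 ≤ y := hx.trans hxy.le
    have hz : 0 ≤ z := hy.trans hyz.le
    have hmem : y ^ q ∈ openSegment ℝ (x ^ q) (z ^ q) :=
      Ioo_subset_openSegment ⟨Real.rpow_lt_rpow hx hxy hq, Real.rpow_lt_rpow hy hyz hq⟩
    obtain ⟨a, b, ha, hb, hab, heq⟩ := hmem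
    have hconv := (strictConvexOn_rpow ((one_lt_div hq).2 hpq)).2 (Real.rpow_nonneg hx q)
      (Real.rpow_nonneg hz q) (Real.rpow_lt_rpow hx (hxy.trans hyz) hq).ne ha hb hab
    rw [heq] at hconv
    simp only [← Real.rpow_mul, hx, hy, hz, mul_div_cancel₀ p hq.ne', smul_eq_mul] at hconv heq
    simp only [abs_of_nonneg, hx, hy, hz] at hhx hhz ⊢
    calc A * y ^ p + B * y ^ q + C
        < A * (a * x ^ p + b * z ^ p) + B * (a * x ^ q + b * z ^ q) + (a + b) * C := by
          rw [heq, hab, one_mul]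
          gcongr
      _ = a * (A * x ^ p + B * x ^ q + C) + b * (A * z ^ p + B * z ^ q + C) := by ring
      _ ≤ 0 := add_nonpos (mul_nonpos_of_nonneg_of_nonpos ha.le hhx)
          (mul_nonpos_of_nonneg_of_nonpos hb.le hhz)

/-- The integral of `h` against the unnormalised two-sided exponential measure centred at `m` with
rates `l` to the right and `r` to the left of `m`. -/
noncomputable def twoSidedLaplace (h : ℝ → ℝ) (m l r : ℝ) : ℝ :=
  laplace (fun y => h (y + m)) l + laplace (fun y => h (y + -m)) r

section TwoSidedLaplace

variable {h k : ℝ → ℝ} {m l r : ℝ}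

lemma twoSidedLaplace_add (hh : HasLaplace h) (hk : HasLaplace k) (m : ℝ) (hl : 0 < l)
    (hr : 0 < r) : twoSidedLaplace (fun x => h x + k x) m l r =
      twoSidedLaplace h m l r + twoSidedLaplace k m l r := by
  rw [twoSidedLaplace, (hh.comp_add_right m).laplace_add (hk.comp_add_right m) hl,
    (hh.comp_add_right (-m)).laplace_add (hk.comp_add_right (-m)) hr, add_add_add_comm]
  rfl

lemma twoSidedLaplace_const_mul (c : ℝ) (h : ℝ → ℝ) (m l r : ℝ) :
    twoSidedLaplace (fun x => c * h x) m l r = c * twoSidedLaplace h m l r := by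
  rw [twoSidedLaplace, laplace_const_mul c, laplace_const_mul c, ← mul_add]
  rfl

lemma twoSidedLaplace_linear_combination {f : ℝ → ℝ} (hf : HasLaplace f) (hh : HasLaplace h)
    (hk : HasLaplace k) (a b c m : ℝ) (hl : 0 < l) (hr : 0 < r) :
    twoSidedLaplace (fun x => a * f x + b * h x + c * k x) m l r =
      a * twoSidedLaplace f m l r + b * twoSidedLaplace h m l r + c * twoSidedLaplace k m l r := by
  rw [twoSidedLaplace_add ((hf.const_mul a).add (hh.const_mul b)) (hk.const_mul c) m hl hr,
    twoSidedLaplace_add (hf.const_mul a) (hh.const_mul b) m hl hr]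
  simp only [twoSidedLaplace_const_mul]

lemma hasDerivAt_twoSidedLaplace_right (hh : HasLaplace h) (m : ℝ) (hl : 0 < l) (r : ℝ) :
    HasDerivAt (fun l => twoSidedLaplace h m l r) (-laplace (fun y => y * h (y + m)) l) l :=
  ((hh.comp_add_right m).hasDerivAt_laplace hl).add_const _

lemma hasDerivAt_twoSidedLaplace_left (hh : HasLaplace h) (m l : ℝ) (hr : 0 < r) :
    HasDerivAt (fun r => twoSidedLaplace h m l r) (-laplace (fun y => y * h (y + -m)) r) r :=
  ((hh.comp_add_right (-m)).hasDerivAt_laplace hr).const_add _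

lemma hasDerivAt_twoSidedLaplace_center (hh : HasLaplace h) (m : ℝ) (hl : 0 < l) (hr : 0 < r) :
    HasDerivAt (fun m => twoSidedLaplace h m l r)
      (l * laplace (fun y => h (y + m)) l - h m -
        (r * laplace (fun y => h (y + -m)) r - h (-m))) m := by
  have hleft := (hh.hasDerivAt_laplace_comp_add hr (-m)).comp m (hasDerivAt_neg m)
  exact ((hh.hasDerivAt_laplace_comp_add hl m).add hleft).congr_deriv (by ring)

lemma twoSidedLaplace_abs_rpow (s m : ℝ) (hl : 0 < l) (hr : 0 < r) :
    twoSidedLaplace (fun x => |x| ^ s) m l r =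
      l⁻¹ * expMoment s m l⁻¹ + r⁻¹ * expMoment s (-m) r⁻¹ := by
  rw [twoSidedLaplace, laplace_abs_add_rpow hl, laplace_abs_add_rpow hr]

lemma twoSidedLaplace_one (m : ℝ) (hl : 0 < l) (hr : 0 < r) :
    twoSidedLaplace (fun _ => 1) m l r = l⁻¹ + r⁻¹ := by
  simpa only [Real.rpow_zero, expMoment_zero_left, mul_one] using
    twoSidedLaplace_abs_rpow 0 m hl hr

lemma twoSidedMoment_eq_div (s m : ℝ) (hl : 0 < l) (hr : 0 < r) :
    twoSidedMoment s m (l⁻¹ + r⁻¹) (l⁻¹ / (l⁻¹ + r⁻¹)) =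
      twoSidedLaplace (fun x => |x| ^ s) m l r / twoSidedLaplace (fun _ => 1) m l r := by
  have hsum : l⁻¹ + r⁻¹ ≠ 0 := by positivity
  have hw : 1 - l⁻¹ / (l⁻¹ + r⁻¹) = r⁻¹ / (l⁻¹ + r⁻¹) := by
    rw [one_sub_div hsum, add_sub_cancel_left]
  rw [twoSidedMoment, hw, div_mul_cancel₀ _ hsum, div_mul_cancel₀ _ hsum,
    twoSidedLaplace_abs_rpow s m hl hr, twoSidedLaplace_one m hl hr]
  ring

end TwoSidedLaplace

lemma hasDerivAt_zero_of_isLocalMax_ratio {p q t₀ P' Q' M' : ℝ} {P Q M : ℝ → ℝ}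
    (hP : HasDerivAt P P' t₀) (hQ : HasDerivAt Q Q' t₀) (hM : HasDerivAt M M' t₀)
    (hP0 : 0 < P t₀) (hQ0 : 0 < Q t₀) (hM0 : 0 < M t₀)
    (hmax : IsLocalMax (fun t => (P t / M t) ^ (1 / p) / (Q t / M t) ^ (1 / q)) t₀) :
    HasDerivAt (fun t => 1 / (p * P t₀) * P t + -(1 / (q * Q t₀)) * Q t +
      (1 / q - 1 / p) / M t₀ * M t) 0 t₀ := by
  have hlog (t : ℝ) (hP : 0 < P t) (hQ : 0 < Q t) (hM : 0 < M t) :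
      Real.log ((P t / M t) ^ (1 / p) / (Q t / M t) ^ (1 / q)) =
        1 / p * Real.log (P t) - 1 / q * Real.log (Q t) + (1 / q - 1 / p) * Real.log (M t) := by
    rw [Real.log_div (by positivity) (by positivity), Real.log_rpow (by positivity),
      Real.log_rpow (by positivity), Real.log_div hP.ne' hM.ne', Real.log_div hQ.ne' hM.ne']
    ring
  have hlogmax : IsLocalMax (fun t => 1 / p * Real.log (P t) - 1 / q * Real.log (Q t) +
      (1 / q - 1 / p) * Real.log (M t)) t₀ := by
    filter_upwards [hmax, hP.continuousAt.eventually_const_lt hP0,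
      hQ.continuousAt.eventually_const_lt hQ0, hM.continuousAt.eventually_const_lt hM0]
      with t hle hPt hQt hMt
    rw [← hlog t hPt hQt hMt, ← hlog t₀ hP0 hQ0 hM0]
    exact Real.log_le_log (by positivity) hle
  have hzero := hlogmax.hasDerivAt_eq_zero ((((hP.log hP0.ne').const_mul (1 / p)).fun_sub
    ((hQ.log hQ0.ne').const_mul (1 / q))).fun_add ((hM.log hM0.ne').const_mul (1 / q - 1 / p)))
  refine (((hP.const_mul _).fun_add (hQ.const_mul _)).fun_add (hM.const_mul _)).congr_deriv ?_
  rw [← hzero]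
  field_simp
  ring

lemma twoSidedLaplace_pos {s m l r : ℝ} (hs : 0 < s) (hl : 0 < l) (hr : 0 < r) :
    0 < twoSidedLaplace (fun x => |x| ^ s) m l r := by
  have hright := expMoment_pos hs (a := m) (.inr (inv_pos.2 hl).ne')
  have hleft := expMoment_pos hs (a := -m) (.inr (inv_pos.2 hr).ne')
  rw [twoSidedLaplace_abs_rpow s m hl hr]
  positivity

/-- The ratio of the `p`-th to the `q`-th moment norm of the two-sided exponential distribution
centred at `m` with rates `l` to the right and `r` to the left of `m`. -/
noncomputable def rateRatio (p q m l r : ℝ) : ℝ :=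
  (twoSidedLaplace (fun x => |x| ^ p) m l r / twoSidedLaplace (fun _ => 1) m l r) ^ (1 / p) /
    (twoSidedLaplace (fun x => |x| ^ q) m l r / twoSidedLaplace (fun _ => 1) m l r) ^ (1 / q)

lemma exists_isSingleWell_hasDerivAt_zero {p q m l r : ℝ} (hq : 0 < q) (hpq : q < p) (hl : 0 < l)
    (hr : 0 < r)
    (hmax : ∀ m' l' r', 0 < l' → 0 < r' → rateRatio p q m' l' r' ≤ rateRatio p q m l r) :
    ∃ h, IsSingleWell h ∧ twoSidedLaplace h m l r = 0 ∧
      HasDerivAt (fun m => twoSidedLaplace h m l r) 0 m ∧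
      HasDerivAt (fun l => twoSidedLaplace h m l r) 0 l ∧
      HasDerivAt (fun r => twoSidedLaplace h m l r) 0 r := by
  have hp := hq.trans hpq
  have hP := HasLaplace.abs_rpow hp.le
  have hQ := HasLaplace.abs_rpow hq.le
  have hM := HasLaplace.const 1
  have hP0 := twoSidedLaplace_pos (m := m) hp hl hr
  have hQ0 := twoSidedLaplace_pos (m := m) hq hl hr
  have hM0 : 0 < twoSidedLaplace (fun _ => 1) m l r := by
    rw [twoSidedLaplace_one m hl hr]
    positivity
  set A := 1 / (p * twoSidedLaplace (fun x => |x| ^ p) m l r) with hA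
  set B := -(1 / (q * twoSidedLaplace (fun x => |x| ^ q) m l r)) with hB
  set C := (1 / q - 1 / p) / twoSidedLaplace (fun _ => 1) m l r with hC
  have hlin (m : ℝ) {l r : ℝ} (hl : 0 < l) (hr : 0 < r) :=
    twoSidedLaplace_linear_combination hP hQ hM A B C m hl hr
  -- The logarithm of the ratio is stationary at a maximum, and its derivative there in each of `m`,
  -- `l`, `r` is that of the transform of `A |x| ^ p + B |x| ^ q + C`.
  refine ⟨_, isSingleWell_rpow_add_rpow_add_const hq hpq (A := A) (by positivity) B (C * 1),
    ?_, ?_, ?_, ?_⟩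
  · rw [hlin m hl hr, hA, hB, hC]
    field_simp
    ring
  · refine (hasDerivAt_zero_of_isLocalMax_ratio (hasDerivAt_twoSidedLaplace_center hP m hl hr)
      (hasDerivAt_twoSidedLaplace_center hQ m hl hr) (hasDerivAt_twoSidedLaplace_center hM m hl hr)
      hP0 hQ0 hM0 (.of_forall fun m' => hmax m' l r hl hr)).congr_of_eventuallyEq ?_
    exact .of_forall fun m' => hlin m' hl hr
  · refine (hasDerivAt_zero_of_isLocalMax_ratio (p := p) (q := q)
      (hasDerivAt_twoSidedLaplace_right hP m hl r) (hasDerivAt_twoSidedLaplace_right hQ m hl r)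
      (hasDerivAt_twoSidedLaplace_right hM m hl r) hP0 hQ0 hM0 ?_).congr_of_eventuallyEq ?_
    · filter_upwards [Ioi_mem_nhds hl] with l' hl' using hmax m l' r hl' hr
    · filter_upwards [Ioi_mem_nhds hl] with l' hl' using hlin m hl' hr
  · refine (hasDerivAt_zero_of_isLocalMax_ratio (p := p) (q := q)
      (hasDerivAt_twoSidedLaplace_left hP m l hr) (hasDerivAt_twoSidedLaplace_left hQ m l hr)
      (hasDerivAt_twoSidedLaplace_left hM m l hr) hP0 hQ0 hM0 ?_).congr_of_eventuallyEq ?_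
    · filter_upwards [Ioi_mem_nhds hr] with r' hr' using hmax m l r' hl hr'
    · filter_upwards [Ioi_mem_nhds hr] with r' hr' using hlin m hl hr'

lemma center_eq_zero_and_rate_eq_of_forall_rateRatio_le {p q m l r : ℝ} (hq : 0 < q) (hpq : q < p)
    (hl : 0 < l) (hr : 0 < r)
    (hmax : ∀ m' l' r', 0 < l' → 0 < r' → rateRatio p q m' l' r' ≤ rateRatio p q m l r) :
    m = 0 ∧ l = r := by
  obtain ⟨h, hh, h0, hcenter, hright, hleft⟩ :=
    exists_isSingleWell_hasDerivAt_zero hq hpq hl hr hmax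
  have hL := hh.toHasLaplace
  have hbalance := (hasDerivAt_twoSidedLaplace_center hL m hl hr).unique hcenter
  have hright1 := neg_eq_zero.1 ((hasDerivAt_twoSidedLaplace_right hL m hl r).unique hright)
  have hleft1 := neg_eq_zero.1 ((hasDerivAt_twoSidedLaplace_left hL m l hr).unique hleft)
  rw [hh.even] at hbalance
  have hright0 : laplace (fun y => h (y + m)) l = 0 := by
    refine (mul_eq_zero.1 (?_ : (l + r) * _ = 0)).resolve_left (by positivity)
    rw [twoSidedLaplace] at h0
    linear_combination hbalance + r * h0
  have hleft0 : laplace (fun y => h (y + -m)) r = 0 := by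
    rwa [twoSidedLaplace, hright0, zero_add] at h0
  rcases le_total 0 m with hm | hm
  · exact hh.center_eq_zero_and_rate_eq hm hl hright0 hright1 hr hleft0
  · obtain ⟨hm0, hrl⟩ := hh.center_eq_zero_and_rate_eq (neg_nonneg.2 hm) hr hleft0 hleft1 hl
      (by rwa [neg_neg])
    exact ⟨neg_eq_zero.1 hm0, hrl.symm⟩

/-- The ratio of the `p`-th to the `q`-th moment norm of the two-sided exponential distribution of
`twoSidedMoment`. -/
noncomputable def momentRatio (p q m σ w : ℝ) : ℝ :=
  twoSidedMoment p m σ w ^ (1 / p) / twoSidedMoment q m σ w ^ (1 / q)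

section MomentRatio

variable {p q m σ w : ℝ}

lemma momentRatio_congr {m' σ' w' : ℝ}
    (h : ∀ s, twoSidedMoment s m σ w = twoSidedMoment s m' σ' w') :
    momentRatio p q m σ w = momentRatio p q m' σ' w' := by
  simp only [momentRatio, h]

lemma momentRatio_mul {c : ℝ} (hp : 0 < p) (hq : 0 < q) (hc : 0 < c) (h : IsTwoSidedParam m σ w) :
    momentRatio p q (c * m) (c * σ) w = momentRatio p q m σ w := by
  have hnorm {s : ℝ} (hs : 0 < s) :
      twoSidedMoment s (c * m) (c * σ) w ^ (1 / s) = c * twoSidedMoment s m σ w ^ (1 / s) := by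
    rw [twoSidedMoment_mul hc.le, Real.mul_rpow (by positivity) (twoSidedMoment_pos hs h).le,
      one_div, Real.rpow_rpow_inv hc.le hs.ne']
  rw [momentRatio, hnorm hp, hnorm hq, mul_div_mul_left _ _ hc.ne', momentRatio]

lemma momentRatio_zero_scale (hp : p ≠ 0) (hq : q ≠ 0) (hm : m ≠ 0) (w : ℝ) :
    momentRatio p q m 0 w = 1 := by
  simp only [momentRatio, twoSidedMoment_zero_scale, one_div, Real.rpow_rpow_inv (abs_nonneg m) hp,
    Real.rpow_rpow_inv (abs_nonneg m) hq, div_self (abs_ne_zero.2 hm)]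

lemma momentRatio_weight_one (hp : 0 < p) (hq : 0 < q) (hσ : 0 < σ) (m : ℝ) :
    momentRatio p q m σ 1 = momentRatio p q (m / σ) 1 1 := by
  have h : IsTwoSidedParam (m / σ) 1 1 := ⟨zero_le_one, zero_le_one, le_rfl, .inr one_ne_zero⟩
  simpa only [mul_div_cancel₀ m hσ.ne', mul_one] using momentRatio_mul hp hq hσ h

lemma one_le_momentRatio_zero_one_one (hq : 0 < q) (hpq : q < p) : 1 ≤ momentRatio p q 0 1 1 := by
  have hp := hq.trans hpq
  have hΓ := Real.Gamma_mul_add_mul_le_rpow_Gamma_mul_rpow_Gamma one_pos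
    (add_pos hp one_pos) (sub_pos.2 ((div_lt_one hp).2 hpq)) (div_pos hq hp) (sub_add_cancel 1 _)
  rw [Real.Gamma_one, Real.one_rpow, one_mul, mul_one, mul_add_one, div_mul_cancel₀ q hp.ne',
    sub_add_add_cancel, add_comm] at hΓ
  have hpos : 0 < Real.Gamma (q + 1) := Real.Gamma_pos_of_pos (by positivity)
  have hpow := Real.rpow_le_rpow hpos.le hΓ (one_div_pos.2 hq).le
  have hexp : q / p * (1 / q) = 1 / p := by field_simp
  rw [← Real.rpow_mul (Real.Gamma_pos_of_pos (by positivity)).le, hexp] at hpow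
  simpa only [momentRatio, twoSidedMoment_one, expMoment_center hp zero_le_one, Real.one_rpow,
    expMoment_center hq zero_le_one, one_mul] using (one_le_div (by positivity)).2 hpow

lemma momentRatio_eq_rateRatio {l r : ℝ} (hl : 0 < l) (hr : 0 < r) :
    momentRatio p q m (l⁻¹ + r⁻¹) (l⁻¹ / (l⁻¹ + r⁻¹)) = rateRatio p q m l r := by
  simp only [momentRatio, rateRatio, twoSidedMoment_eq_div _ m hl hr]

end MomentRatio

lemma exists_forall_momentRatio_le {p q : ℝ} (hp : 0 < p) (hq : 0 < q) :
    ∃ m σ w, IsTwoSidedParam m σ w ∧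
      ∀ m' σ' w', IsTwoSidedParam m' σ' w' → momentRatio p q m' σ' w' ≤ momentRatio p q m σ w := by
  let S : Set (ℝ × ℝ × ℝ) :=
    (Icc (-1) 1 ×ˢ (Icc 0 1 ×ˢ Icc 0 1)) ∩ {z | |z.1| + z.2.1 = 1}
  have hS : IsCompact S := (isCompact_Icc.prod (isCompact_Icc.prod isCompact_Icc)).inter_right
    (isClosed_eq (by fun_prop) continuous_const)
  have hparam : ∀ z ∈ S, IsTwoSidedParam z.1 z.2.1 z.2.2 := fun z hz =>
    ⟨hz.1.2.1.1, hz.1.2.2.1, hz.1.2.2.2, by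
      by_contra! h
      simpa [h.1, h.2] using hz.2⟩
  have hcont : ContinuousOn (fun z : ℝ × ℝ × ℝ => momentRatio p q z.1 z.2.1 z.2.2) S := by
    have hnorm {s : ℝ} (hs : 0 < s) :
        ContinuousOn (fun z : ℝ × ℝ × ℝ => twoSidedMoment s z.1 z.2.1 z.2.2 ^ (1 / s)) S :=
      (continuous_twoSidedMoment hs.le).continuousOn.rpow_const fun _ _ => .inr (by positivity)
    exact (hnorm hp).div (hnorm hq) fun z hz =>
      (Real.rpow_pos_of_pos (twoSidedMoment_pos hq (hparam z hz)) _).ne'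
  obtain ⟨z, hz, hmax⟩ := hS.exists_isMaxOn ⟨(1, 0, 0), by simp [S]⟩ hcont
  refine ⟨z.1, z.2.1, z.2.2, hparam z hz, fun m σ w h => ?_⟩
  have hσ := h.scale_nonneg
  have hpos : 0 < |m| + σ := by
    rcases h.center_or_scale_ne_zero with h0 | h0
    · have := abs_pos.2 h0
      positivity
    · have := hσ.lt_of_ne' h0
      positivity
  rw [← momentRatio_mul hp hq (inv_pos.2 hpos) h]
  have hnorm : |(|m| + σ)⁻¹ * m| + (|m| + σ)⁻¹ * σ = 1 := by
    rw [abs_mul, abs_of_pos (inv_pos.2 hpos), ← mul_add, inv_mul_cancel₀ hpos.ne']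
  have hscale : 0 ≤ (|m| + σ)⁻¹ * σ := by positivity
  have hcenter := abs_nonneg ((|m| + σ)⁻¹ * m)
  have hmem : ((|m| + σ)⁻¹ * m, (|m| + σ)⁻¹ * σ, w) ∈ S :=
    ⟨⟨abs_le.1 (by linarith), ⟨hscale, by linarith⟩, h.weight_nonneg, h.weight_le_one⟩, hnorm⟩
  exact hmax hmem

lemma exists_rates_of_mem_Ioo {σ w : ℝ} (hσ : 0 < σ) (hw : w ∈ Ioo 0 1) :
    ∃ l r, 0 < l ∧ 0 < r ∧ l⁻¹ + r⁻¹ = σ ∧ l⁻¹ / (l⁻¹ + r⁻¹) = w := by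
  have hsum : w * σ + (1 - w) * σ = σ := by ring
  refine ⟨(w * σ)⁻¹, ((1 - w) * σ)⁻¹, inv_pos.2 (mul_pos hw.1 hσ),
    inv_pos.2 (mul_pos (sub_pos.2 hw.2) hσ), ?_, ?_⟩
  · rw [inv_inv, inv_inv, hsum]
  · rw [inv_inv, inv_inv, hsum, mul_div_cancel_right₀ w hσ.ne']

lemma isTwoSidedParam_of_rates {l r : ℝ} (hl : 0 < l) (hr : 0 < r) (m : ℝ) :
    IsTwoSidedParam m (l⁻¹ + r⁻¹) (l⁻¹ / (l⁻¹ + r⁻¹)) where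
  scale_nonneg := by positivity
  weight_nonneg := by positivity
  weight_le_one := div_le_one_of_le₀ (le_add_of_nonneg_right (by positivity)) (by positivity)
  center_or_scale_ne_zero := .inr (by positivity)

lemma momentRatio_eq_of_isMax_of_mem_Ioo {p q m σ w : ℝ} (hq : 0 < q) (hpq : q < p) (hσ : 0 < σ)
    (hw : w ∈ Ioo 0 1)
    (hmax : ∀ m' σ' w', IsTwoSidedParam m' σ' w' →
      momentRatio p q m' σ' w' ≤ momentRatio p q m σ w) :
    momentRatio p q m σ w = momentRatio p q 0 1 1 := by
  obtain ⟨l, r, hl, hr, rfl, rfl⟩ := exists_rates_of_mem_Ioo hσ hw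
  simp only [momentRatio_eq_rateRatio hl hr] at hmax
  obtain ⟨rfl, rfl⟩ := center_eq_zero_and_rate_eq_of_forall_rateRatio_le hq hpq hl hr
    fun m' l' r' hl' hr' => by
      simpa only [momentRatio_eq_rateRatio hl' hr'] using
        hmax _ _ _ (isTwoSidedParam_of_rates hl' hr' m')
  have hhalf : l⁻¹ / (l⁻¹ + l⁻¹) = 1 / 2 := by field_simp; norm_num
  have hone := momentRatio_weight_one (hq.trans hpq) hq (inv_pos.2 hl) 0
  rw [zero_div] at hone
  rw [← hone]
  refine momentRatio_congr fun s => ?_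
  rw [twoSidedMoment_one, twoSidedMoment, neg_zero, hhalf]
  ring_nf

lemma exists_forall_momentRatio_le_one_one {p q : ℝ} (hq : 0 < q) (hpq : q < p) :
    ∃ a, ∀ m σ w, IsTwoSidedParam m σ w → momentRatio p q m σ w ≤ momentRatio p q a 1 1 := by
  have hp := hq.trans hpq
  obtain ⟨m, σ, w, h, hmax⟩ := exists_forall_momentRatio_le hp hq
  suffices ∃ a, momentRatio p q m σ w ≤ momentRatio p q a 1 1 by
    obtain ⟨a, ha⟩ := this
    exact ⟨a, fun m' σ' w' h' => (hmax m' σ' w' h').trans ha⟩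
  rcases h.scale_nonneg.eq_or_lt with rfl | hσ
  · have hm := h.center_or_scale_ne_zero.resolve_right (absurd rfl)
    exact ⟨0, (momentRatio_zero_scale hp.ne' hq.ne' hm w).trans_le
      (one_le_momentRatio_zero_one_one hq hpq)⟩
  rcases h.weight_nonneg.eq_or_lt with rfl | hw0
  · have hreflect : momentRatio p q m σ 0 = momentRatio p q (-m) σ 1 :=
      momentRatio_congr fun s => by rw [← twoSidedMoment_reflect, sub_zero]
    exact ⟨-m / σ, (hreflect.trans (momentRatio_weight_one hp hq hσ (-m))).le⟩
  rcases h.weight_le_one.eq_or_lt with rfl | hw1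
  · exact ⟨m / σ, (momentRatio_weight_one hp hq hσ m).le⟩
  · exact ⟨0, (momentRatio_eq_of_isMax_of_mem_Ioo hq hpq hσ ⟨hw0, hw1⟩ hmax).le⟩

section WithDensity

variable {f : ℝ → ℝ}

lemma isProbabilityMeasure_withDensity_ofReal_iff (hf0 : ∀ x, 0 ≤ f x) (hf : Measurable f) :
    IsProbabilityMeasure (volume.withDensity fun x => ENNReal.ofReal (f x)) ↔
      Integrable f ∧ ∫ x, f x = 1 := by
  rw [isProbabilityMeasure_iff, withDensity_apply _ MeasurableSet.univ, Measure.restrict_univ]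
  constructor
  · intro h
    have hinteg : ∫ x, f x = 1 := by
      rw [integral_eq_lintegral_of_nonneg_ae (ae_of_all _ hf0) hf.aestronglyMeasurable, h,
        ENNReal.toReal_one]
    exact ⟨.of_integral_ne_zero (hinteg ▸ one_ne_zero), hinteg⟩
  · rintro ⟨hfi, hinteg⟩
    rw [← ofReal_integral_eq_lintegral_ofReal hfi (ae_of_all _ hf0), hinteg, ENNReal.ofReal_one]

lemma integrable_abs_rpow_withDensity_iff (hf0 : ∀ x, 0 ≤ f x) (hf : Measurable f) (s : ℝ) :
    Integrable (fun x => |x| ^ s) (volume.withDensity fun x => ENNReal.ofReal (f x)) ↔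
      Integrable fun x => |x| ^ s * f x := by
  rw [integrable_withDensity_iff_integrable_smul' hf.ennreal_ofReal (by simp)]
  simp only [ENNReal.toReal_ofReal (hf0 _), smul_eq_mul, mul_comm]

lemma momNorm_withDensity (hf0 : ∀ x, 0 ≤ f x) (hf : Measurable f) (s : ℝ) :
    momNorm (volume.withDensity fun x => ENNReal.ofReal (f x)) s = absMoment s f ^ (1 / s) := by
  rw [momNorm, integral_withDensity_eq_integral_toReal_smul hf.ennreal_ofReal (by simp)]
  simp only [absMoment, ENNReal.toReal_ofReal (hf0 _), smul_eq_mul, mul_comm]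

end WithDensity

lemma momNorm_dirac (c s : ℝ) : momNorm (Measure.dirac c) s = (|c| ^ s) ^ (1 / s) := by
  rw [momNorm, integral_dirac]

lemma IsLogConcave.exists_momNorm_div_le_momentRatio {μ : Measure ℝ} {p q : ℝ}
    (hμ : IsLogConcave μ) (hq : 0 < q) (hpq : q < p) (hpos : 0 < momNorm μ q) :
    ∃ m σ w, IsTwoSidedParam m σ w ∧ momNorm μ p / momNorm μ q ≤ momentRatio p q m σ w := by
  obtain ⟨hprob, ⟨c, rfl⟩ | ⟨f, hf0, rfl, hlc⟩⟩ := hμ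
  · have hc : c ≠ 0 := by
      rintro rfl
      rw [momNorm_dirac, abs_zero, Real.zero_rpow hq.ne', Real.zero_rpow (by positivity)] at hpos
      exact hpos.false
    refine ⟨c, 0, 1, ⟨le_rfl, zero_le_one, le_rfl, .inl hc⟩, ?_⟩
    simp only [momNorm_dirac, momentRatio, twoSidedMoment_zero_scale, le_refl]
  · have hf : IsLogConcaveFun f := ⟨hf0, hlc⟩
    obtain ⟨hfi, hf1⟩ := (isProbabilityMeasure_withDensity_ofReal_iff hf0 hf.measurable).1 hprob
    obtain ⟨m, σ, w, h, heq, hle⟩ := hf.isTwoSidedDominated hfi hf1 hq hpq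
    refine ⟨m, σ, w, h, ?_⟩
    rw [momNorm_withDensity hf0 hf.measurable, momNorm_withDensity hf0 hf.measurable, momentRatio,
      heq]
    have hpow := Real.rpow_le_rpow (absMoment_nonneg hf0 p) hle (one_div_pos.2 (hq.trans hpq)).le
    exact div_le_div_of_nonneg_right hpow (Real.rpow_nonneg (twoSidedMoment_pos hq h).le _)

/-- The density of `E + a`, where `E` has the exponential distribution with parameter `1`. -/
noncomputable def shiftedExpDensity (a : ℝ) : ℝ → ℝ := twoSidedExp a 1 1

lemma shiftedExpDensity_of_lt {a x : ℝ} (h : a < x) :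
    shiftedExpDensity a x = Real.exp (-(x - a)) := by
  rw [shiftedExpDensity, twoSidedExp_of_lt h]
  simp [expDensity]

lemma shiftedExpDensity_of_le {a x : ℝ} (h : x ≤ a) : shiftedExpDensity a x = 0 := by
  rw [shiftedExpDensity, twoSidedExp_of_le h]
  simp [expDensity]

lemma isLogConcaveFun_shiftedExpDensity (a : ℝ) : IsLogConcaveFun (shiftedExpDensity a) := by
  have hnonneg := twoSidedExp_nonneg (m := a) zero_le_one zero_le_one le_rfl
  refine ⟨hnonneg, fun x y l h0 h1 => ?_⟩
  rcases h0.eq_or_lt with rfl | h0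
  · simp
  rcases h1.eq_or_lt with rfl | h1
  · simp
  have h1l := sub_pos.2 h1
  rcases le_or_gt x a with hx | hx
  · rw [shiftedExpDensity_of_le hx, Real.zero_rpow h0.ne', zero_mul]
    exact hnonneg _
  rcases le_or_gt y a with hy | hy
  · rw [shiftedExpDensity_of_le hy, Real.zero_rpow h1l.ne', mul_zero]
    exact hnonneg _
  have hz : a < l * x + (1 - l) * y := by nlinarith
  rw [shiftedExpDensity_of_lt hx, shiftedExpDensity_of_lt hy, shiftedExpDensity_of_lt hz,
    ← Real.exp_mul, ← Real.exp_mul, ← Real.exp_add]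
  exact (congrArg Real.exp (by ring)).le

lemma hasAbsMoments_shiftedExpDensity (a : ℝ) : HasAbsMoments (shiftedExpDensity a) :=
  hasAbsMoments_twoSidedExp zero_le_one zero_le_one le_rfl

lemma absMoment_shiftedExpDensity {s : ℝ} (hs : 0 ≤ s) (a : ℝ) :
    absMoment s (shiftedExpDensity a) = expMoment s a 1 := by
  rw [shiftedExpDensity, absMoment_twoSidedExp hs one_pos zero_le_one le_rfl, twoSidedMoment_one]

/-- The distribution of `E + a`, where `E` has the exponential distribution with parameter `1`. -/
noncomputable def shiftedExpMeasure (a : ℝ) : Measure ℝ :=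
  volume.withDensity fun x => ENNReal.ofReal (shiftedExpDensity a x)

lemma isLogConcave_shiftedExpMeasure (a : ℝ) : IsLogConcave (shiftedExpMeasure a) := by
  have hf := isLogConcaveFun_shiftedExpDensity a
  refine ⟨(isProbabilityMeasure_withDensity_ofReal_iff hf.nonneg hf.measurable).2 ⟨?_, ?_⟩,
    .inr ⟨shiftedExpDensity a, hf.nonneg, rfl, hf.rpow_mul_rpow_le⟩⟩
  · simpa only [Real.rpow_zero, one_mul] using hasAbsMoments_shiftedExpDensity a 0 le_rfl
  · rw [← absMoment_zero, absMoment_shiftedExpDensity le_rfl, expMoment_zero_left]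

lemma integrable_abs_rpow_shiftedExpMeasure {s : ℝ} (hs : 0 ≤ s) (a : ℝ) :
    Integrable (fun x => |x| ^ s) (shiftedExpMeasure a) :=
  have hf := isLogConcaveFun_shiftedExpDensity a
  (integrable_abs_rpow_withDensity_iff hf.nonneg hf.measurable s).2
    (hasAbsMoments_shiftedExpDensity a s hs)

lemma momNorm_shiftedExpMeasure {s : ℝ} (hs : 0 ≤ s) (a : ℝ) :
    momNorm (shiftedExpMeasure a) s = expAddNorm s a := by
  have hf := isLogConcaveFun_shiftedExpDensity a
  rw [shiftedExpMeasure, momNorm_withDensity hf.nonneg hf.measurable,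
    absMoment_shiftedExpDensity hs, expAddNorm_eq]

lemma expAddNorm_pos {s : ℝ} (hs : 0 < s) (a : ℝ) : 0 < expAddNorm s a := by
  rw [expAddNorm_eq]
  exact Real.rpow_pos_of_pos (expMoment_pos hs (.inr one_ne_zero)) _

lemma momentRatio_one_one (p q a : ℝ) :
    momentRatio p q a 1 1 = expAddNorm p a / expAddNorm q a := by
  simp only [momentRatio, twoSidedMoment_one, expAddNorm_eq]

/-- In the class of all log-concave real random variables `X` with
`0 < ‖X‖_q < ∞`, for `p > q > 0` the supremum of `‖X‖_p / ‖X‖_q` is attained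
for a shifted exponential distribution `E + a`. -/
theorem sup_ratio_eq_shifted_exponential (p q : ℝ) (hq : 0 < q) (hpq : q < p) :
    ∃ a : ℝ,
      sSup {r : ℝ | ∃ μ : Measure ℝ, IsLogConcave μ ∧
          Integrable (fun x => |x| ^ q) μ ∧ 0 < momNorm μ q ∧
          r = momNorm μ p / momNorm μ q} =
        expAddNorm p a / expAddNorm q a := by
  obtain ⟨a, ha⟩ := exists_forall_momentRatio_le_one_one hq hpq
  refine ⟨a, IsGreatest.csSup_eq ⟨⟨shiftedExpMeasure a, isLogConcave_shiftedExpMeasure a,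
    integrable_abs_rpow_shiftedExpMeasure hq.le a, ?_, ?_⟩, ?_⟩⟩
  · exact (momNorm_shiftedExpMeasure hq.le a).symm ▸ expAddNorm_pos hq a
  · rw [momNorm_shiftedExpMeasure (hq.trans hpq).le, momNorm_shiftedExpMeasure hq.le]
  · rintro _ ⟨μ, hμ, -, hpos, rfl⟩
    obtain ⟨m, σ, w, h, hle⟩ := hμ.exists_momNorm_div_le_momentRatio hq hpq hpos
    exact hle.trans ((ha m σ w h).trans_eq (momentRatio_one_one p q a))
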